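/- Suppose there exists R such that every elliptic curve E over ℚ with j-invariant equal to 0 satisfies rank E(ℚ) ≤ R. Then there exists an integer N₀ such that for every sixth-power free integer n, every sequence of affine rational points on the Mordell curve Aₙ : y² = x³ + n whose x-coordinates form a non-trivial arithmetic progression, or whose y-coordinates form a non-trivial arithmetic progression, has length at most N₀. -/

import Mathlib

open scoped TensorProduct

/-- The rank of an abelian group `G`, i.e. `dim_ℚ (G ⊗_ℤ ℚ)`. -/
noncomputable def grpRank (G : Type*) [AddCommGroup G] : ℕ :=
  Module.finrank ℚ (ℚ ⊗[ℤ] G)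

/-- `u 0, …, u (N-1)` is a non-trivial arithmetic progression. -/
def IsNontrivAP {F : Type*} [Field F] {N : ℕ} (u : Fin N → F) : Prop :=
  ∃ a b : F, b ≠ 0 ∧ ∀ i : Fin N, u i = a + (((i : ℕ) + 1 : ℕ) : F) * b

/-- A nonzero integer is sixth-power free if no `p⁶` divides it. -/
def SixthPowerFree (n : ℤ) : Prop :=
  n ≠ 0 ∧ ∀ p : ℕ, p.Prime → ¬ ((p : ℤ) ^ 6 ∣ n)

/-- The Mordell curve `Aₙ : y² = x³ + n` over `ℚ`. -/
def MordellCurve (n : ℤ) : WeierstrassCurve ℚ :=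
  ⟨0, 0, 0, 0, (n : ℚ)⟩

/-!
Measure a point `(x, y)` of `y² = x³ + n` by the height of `x³ / n`. This height is invariant under
twisting, and it satisfies the parallelogram law up to an error independent of `n`. Any three terms
of an arithmetic progression satisfy a linear relation with small coefficients, so if three points
`P₀, P₁, P₂` have such terms as coordinates, then `h(P₀) ≤ h(P₁ - P₀) + h(P₂ - P₀) + O(1)`, again
uniformly in `n`. Inside the Euclidean space `ℝʳ` attached to the canonical height of a curve of
rank `r`, this is incompatible with having many points of large height, since among sufficiently
many vectors of length at most `ρ`, three are at mutual distance at most `ρ / 4`. Hence all points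
of a long progression have height bounded in terms of `r`, and by Northcott the progression,
divided by its difference, is one of finitely many. For each of these, a separable polynomial takes
perfect power values, up to a common factor, along the progression, which bounds its length.

Since `grpRank` is a `finrank`, it is the rank only if `ℚ ⊗ E(ℚ)` is finite-dimensional; this is
the Mordell–Weil theorem, which is obtained for Mordell curves by a `2`-descent.
-/

open Height AdmissibleAbsValues Real

/-! ### Comparing heights through local estimates -/

section LocalToGlobal

variable {K : Type*} [Field K]

/-- A constant `κ` for which `v` satisfies the ultrametric inequality up to the factor `κ`. Every
absolute value admits `κ = 2` and the nonarchimedean ones admit `κ = 1`; estimates carried out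
uniformly in `κ` therefore lose a factor only at the archimedean places. -/
structure IsQuasiUltrametric (v : AbsoluteValue K ℝ) (κ : ℝ) : Prop where
  one_le : 1 ≤ κ
  map_add_le_mul_max : ∀ a b, v (a + b) ≤ κ * max (v a) (v b)

lemma isQuasiUltrametric_two (v : AbsoluteValue K ℝ) : IsQuasiUltrametric v 2 where
  one_le := one_le_two
  map_add_le_mul_max a b := (v.add_le a b).trans <| by
    linarith [le_max_left (v a) (v b), le_max_right (v a) (v b)]

lemma isQuasiUltrametric_one_of_isNonarchimedean {v : AbsoluteValue K ℝ}
    (hv : IsNonarchimedean v) : IsQuasiUltrametric v 1 where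
  one_le := le_rfl
  map_add_le_mul_max a b := (hv a b).trans_eq (one_mul _).symm

/-- The contribution of `v` to the product of the heights of the members of `l`. -/
noncomputable def localHeightProd (l : List K) (v : AbsoluteValue K ℝ) : ℝ :=
  (l.map fun x ↦ max (v x) 1).prod

lemma localHeightProd_cons (x : K) (l : List K) (v : AbsoluteValue K ℝ) :
    localHeightProd (x :: l) v = max (v x) 1 * localHeightProd l v := by
  simp [localHeightProd]

lemma localHeightProd_nonneg (l : List K) (v : AbsoluteValue K ℝ) : 0 ≤ localHeightProd l v :=
  List.prod_nonneg fun a ha ↦ by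
    obtain ⟨x, -, rfl⟩ := List.mem_map.1 ha
    positivity

variable [AdmissibleAbsValues K]

lemma hasFiniteMulSupport_max_one (x : K) :
    (fun v : nonarchAbsVal (K := K) ↦ max (v.val x) 1).HasFiniteMulSupport := by
  rcases eq_or_ne x 0 with rfl | hx
  · simp [Function.HasFiniteMulSupport, Function.mulSupport]
  · refine (hasFiniteMulSupport hx).subset fun v hv hv' ↦ hv ?_
    simp only at hv' ⊢
    rw [hv', max_self]

lemma hasFiniteMulSupport_localHeightProd (l : List K) :
    (fun v : nonarchAbsVal (K := K) ↦ localHeightProd l v.val).HasFiniteMulSupport := by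
  induction l with
  | nil => simp [localHeightProd, Function.HasFiniteMulSupport, Function.mulSupport]
  | cons a l ih =>
    simp only [localHeightProd_cons]
    exact (hasFiniteMulSupport_max_one a).mul ih

lemma prod_mulHeight₁_eq (l : List K) :
    (l.map mulHeight₁).prod =
      (archAbsVal.map (localHeightProd l)).prod *
        ∏ᶠ v : nonarchAbsVal (K := K), localHeightProd l v.val := by
  induction l with
  | nil => simp [show localHeightProd ([] : List K) = fun _ ↦ 1 from rfl]
  | cons a l ih =>
    simp only [localHeightProd_cons, List.map_cons, List.prod_cons, ih, Multiset.prod_map_mul]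
    rw [finprod_mul_distrib (hasFiniteMulSupport_max_one a)
      (hasFiniteMulSupport_localHeightProd l), mulHeight₁_eq]
    ring

lemma prod_mulHeight₁_pos (l : List K) : 0 < (l.map mulHeight₁).prod :=
  List.prod_pos fun a ha ↦ by
    obtain ⟨x, -, rfl⟩ := List.mem_map.1 ha
    exact mulHeight₁_pos x

lemma sum_logHeight₁_eq_log_prod (l : List K) :
    (l.map logHeight₁).sum = log (l.map mulHeight₁).prod := by
  induction l with
  | nil => simp
  | cons a l ih =>
    rw [List.map_cons, List.map_cons, List.prod_cons, List.sum_cons, ih,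
      log_mul (mulHeight₁_ne_zero a) (prod_mulHeight₁_pos l).ne', logHeight₁_eq_log_mulHeight₁]

section

variable {l r : List K} {s : K} {m : ℕ}

lemma prod_archAbsVal_le_of_local
    (h : ∀ v κ, IsQuasiUltrametric v κ →
      localHeightProd l v * v s ≤ κ ^ m * localHeightProd r v) :
    (archAbsVal.map (localHeightProd l)).prod * (archAbsVal.map (· s)).prod ≤
      2 ^ (m * totalWeight K) * (archAbsVal.map (localHeightProd r)).prod := by
  have hle := Multiset.prod_map_le_prod_map₀ (s := archAbsVal (K := K))
    (fun v ↦ localHeightProd l v * v s) (fun v ↦ 2 ^ m * localHeightProd r v)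
    (fun v _ ↦ mul_nonneg (localHeightProd_nonneg l v) (v.nonneg s))
    (fun v _ ↦ h v 2 (isQuasiUltrametric_two v))
  rwa [Multiset.prod_map_mul, Multiset.prod_map_mul, Multiset.map_const', Multiset.prod_replicate,
    ← pow_mul] at hle

lemma finprod_nonarchAbsVal_le_of_local (hs : s ≠ 0)
    (h : ∀ v κ, IsQuasiUltrametric v κ →
      localHeightProd l v * v s ≤ κ ^ m * localHeightProd r v) :
    (∏ᶠ v : nonarchAbsVal (K := K), localHeightProd l v.val) *
        ∏ᶠ v : nonarchAbsVal (K := K), v.val s ≤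
      ∏ᶠ v : nonarchAbsVal (K := K), localHeightProd r v.val := by
  have hl := hasFiniteMulSupport_localHeightProd l
  rw [← finprod_mul_distrib hl (hasFiniteMulSupport hs)]
  refine finprod_le_finprod (hl.mul (hasFiniteMulSupport hs))
    (fun v ↦ mul_nonneg (localHeightProd_nonneg l _) (v.val.nonneg s))
    (hasFiniteMulSupport_localHeightProd r) fun v ↦ ?_
  simpa using h v.val 1 (isQuasiUltrametric_one_of_isNonarchimedean (isNonarchimedean v.val v.2))

-- The factor `v s` disappears globally by the product formula.
theorem sum_logHeight₁_le_of_local (hs : s ≠ 0)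
    (h : ∀ v κ, IsQuasiUltrametric v κ →
      localHeightProd l v * v s ≤ κ ^ m * localHeightProd r v) :
    (l.map logHeight₁).sum ≤ (r.map logHeight₁).sum + m * (totalWeight K * log 2) := by
  have hmul : (l.map mulHeight₁).prod ≤ 2 ^ (m * totalWeight K) * (r.map mulHeight₁).prod := by
    have harch : 0 ≤ (archAbsVal.map (localHeightProd r)).prod :=
      Multiset.prod_nonneg fun a ha ↦ by
        obtain ⟨v, -, rfl⟩ := Multiset.mem_map.1 ha
        exact localHeightProd_nonneg r v
    have hnonarch : 0 ≤ (∏ᶠ v : nonarchAbsVal (K := K), localHeightProd l v.val) *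
        ∏ᶠ v : nonarchAbsVal (K := K), v.val s :=
      mul_nonneg (finprod_nonneg fun v ↦ localHeightProd_nonneg l _)
        (finprod_nonneg fun v ↦ v.val.nonneg s)
    have hmul := mul_le_mul (prod_archAbsVal_le_of_local h)
      (finprod_nonarchAbsVal_le_of_local hs h) hnonarch (by positivity)
    rw [prod_mulHeight₁_eq l, prod_mulHeight₁_eq r, ← mul_assoc]
    refine le_of_eq_of_le ?_ hmul
    rw [mul_mul_mul_comm, product_formula hs, mul_one]
  rw [sum_logHeight₁_eq_log_prod, sum_logHeight₁_eq_log_prod]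
  calc log (l.map mulHeight₁).prod
      ≤ log (2 ^ (m * totalWeight K) * (r.map mulHeight₁).prod) :=
        log_le_log (prod_mulHeight₁_pos l) hmul
    _ = log (r.map mulHeight₁).prod + m * (totalWeight K * log 2) := by
        rw [log_mul (by positivity) (prod_mulHeight₁_pos r).ne', log_pow]
        push_cast
        ring

end

end LocalToGlobal

section MordellHeight

variable {K : Type*} [Field K]

/-- The size `|n|_v ^ (1/3)` that the `x`-coordinates on `y² = x³ + n` naturally have at `v`. -/
noncomputable def localScale (v : AbsoluteValue K ℝ) (n : K) : ℝ :=
  v n ^ (1 / 3 : ℝ)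

/-- The size of `x` at `v`, cut off below at the natural scale of the curve `y² = x³ + n`. -/
noncomputable def localSize (v : AbsoluteValue K ℝ) (n x : K) : ℝ :=
  max (v x) (localScale v n)

variable {v : AbsoluteValue K ℝ} {n x : K}

lemma localScale_pow_three (v : AbsoluteValue K ℝ) (n : K) : localScale v n ^ 3 = v n := by
  rw [localScale, ← rpow_natCast, ← rpow_mul (v.nonneg n)]
  norm_num

lemma localScale_nonneg (v : AbsoluteValue K ℝ) (n : K) : 0 ≤ localScale v n :=
  rpow_nonneg (v.nonneg n) _

lemma localScale_pos (hn : n ≠ 0) : 0 < localScale v n :=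
  rpow_pos_of_pos (v.pos hn) _

lemma le_localSize : v x ≤ localSize v n x :=
  le_max_left _ _

lemma localScale_le_localSize : localScale v n ≤ localSize v n x :=
  le_max_right _ _

lemma localSize_nonneg : 0 ≤ localSize v n x :=
  (v.nonneg x).trans le_localSize

lemma localSize_zero (v : AbsoluteValue K ℝ) (n : K) : localSize v n 0 = localScale v n := by
  rw [localSize, v.map_zero, max_eq_right (localScale_nonneg v n)]

lemma map_le_localSize_pow_three : v n ≤ localSize v n x ^ 3 :=
  localScale_pow_three v n ▸
    pow_le_pow_left₀ (localScale_nonneg v n) localScale_le_localSize 3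

lemma map_mul_le_localSize_mul (v : AbsoluteValue K ℝ) (n x₁ x₂ : K) :
    v (x₁ * x₂) ≤ localSize v n x₁ * localSize v n x₂ := by
  rw [v.map_mul]
  exact mul_le_mul le_localSize le_localSize (v.nonneg _) localSize_nonneg

lemma localScale_sq_le_localSize_mul (v : AbsoluteValue K ℝ) (n x₁ x₂ : K) :
    localScale v n ^ 2 ≤ localSize v n x₁ * localSize v n x₂ := by
  rw [sq]
  exact mul_le_mul localScale_le_localSize localScale_le_localSize (localScale_nonneg v n)
    localSize_nonneg

lemma max_localSize_mul_localScale_le (v : AbsoluteValue K ℝ) (n a₁ a₂ : K) :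
    max (localSize v n a₁) (localSize v n a₂) * localScale v n ≤
      localSize v n a₁ * localSize v n a₂ := by
  have hτ := localScale_nonneg v n
  rw [max_mul_of_nonneg _ _ hτ]
  refine max_le (mul_le_mul_of_nonneg_left localScale_le_localSize localSize_nonneg) ?_
  rw [mul_comm]
  exact mul_le_mul_of_nonneg_right localScale_le_localSize localSize_nonneg

lemma max_map_pow_three_div_one (hn : n ≠ 0) (x : K) :
    max (v (x ^ 3 / n)) 1 = (localSize v n x / localScale v n) ^ 3 := by
  have hτ : 0 < localScale v n := localScale_pos hn
  rw [map_div₀, v.map_pow, ← localScale_pow_three v n, ← div_pow, localSize]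
  rcases le_total (v x) (localScale v n) with h | h
  · rw [max_eq_right h, div_self hτ.ne', one_pow, max_eq_right]
    exact pow_le_one₀ (div_nonneg (v.nonneg x) hτ.le) ((div_le_one hτ).2 h)
  · rw [max_eq_left h, max_eq_left]
    exact one_le_pow₀ ((one_le_div hτ).2 h)

lemma localHeightProd_map_pow_three_div (hn : n ≠ 0) (l : List K) :
    localHeightProd (l.map fun x ↦ x ^ 3 / n) v =
      ((l.map (localSize v n)).prod / localScale v n ^ l.length) ^ 3 := by
  induction l with
  | nil => simp [localHeightProd]
  | cons a l ih =>
    rw [List.map_cons, localHeightProd_cons, ih, max_map_pow_three_div_one hn, List.map_cons,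
      List.prod_cons, List.length_cons, ← mul_pow, div_mul_div_comm, ← pow_succ']

variable [AdmissibleAbsValues K]

/-- The height of the point of `y² = x³ + n` with first coordinate `x`. Unlike the height of `x`
it is invariant under the isomorphisms `(x, n) ↦ (u²x, u⁶n)`, so that it obeys the parallelogram
law with an error that does not depend on `n`. -/
noncomputable def mordellHeight (n x : K) : ℝ :=
  logHeight₁ (x ^ 3 / n)

theorem sum_mordellHeight_le_of_local (hn : n ≠ 0) {l r : List K} {s : K} (hs : s ≠ 0) {m : ℕ}
    (h : ∀ v κ, IsQuasiUltrametric v κ →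
      (l.map (localSize v n)).prod * v s ≤ κ ^ m * (r.map (localSize v n)).prod) :
    (l.map (mordellHeight n)).sum ≤
      (r.map (mordellHeight n)).sum + 3 * m * (totalWeight K * log 2) := by
  have hlocal : ∀ v κ, IsQuasiUltrametric v κ →
      localHeightProd (l.map fun x ↦ x ^ 3 / n) v * v (s ^ 3 * n ^ l.length / n ^ r.length) ≤
        κ ^ (3 * m) * localHeightProd (r.map fun x ↦ x ^ 3 / n) v := by
    intro v κ hv
    have hτ : 0 < localScale v n := localScale_pos hn
    have hl : 0 ≤ (l.map (localSize v n)).prod := List.prod_nonneg fun a ha ↦ by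
      obtain ⟨x, -, rfl⟩ := List.mem_map.1 ha
      exact localSize_nonneg
    rw [localHeightProd_map_pow_three_div hn, localHeightProd_map_pow_three_div hn, map_div₀,
      v.map_mul, v.map_pow, v.map_pow, v.map_pow, ← localScale_pow_three v n]
    calc _ = ((l.map (localSize v n)).prod * v s / localScale v n ^ r.length) ^ 3 := by
          field_simp
          ring
      _ ≤ (κ ^ m * (r.map (localSize v n)).prod / localScale v n ^ r.length) ^ 3 := by
          have := v.nonneg s
          exact pow_le_pow_left₀ (by positivity) (by gcongr ?_ / _; exact h v κ hv) 3
      _ = _ := by ring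
  have hs' : s ^ 3 * n ^ l.length / n ^ r.length ≠ 0 := by positivity
  have hsum := sum_logHeight₁_le_of_local hs' hlocal
  rw [List.map_map, List.map_map] at hsum
  exact_mod_cast hsum

end MordellHeight

namespace IsQuasiUltrametric

variable {K : Type*} [Field K] {v : AbsoluteValue K ℝ} {κ : ℝ}

lemma pos (hv : IsQuasiUltrametric v κ) : 0 < κ :=
  zero_lt_one.trans_le hv.one_le

lemma pow_mul_le_pow_mul (hv : IsQuasiUltrametric v κ) {i j : ℕ} (hij : i ≤ j) {A : ℝ}
    (hA : 0 ≤ A) : κ ^ i * A ≤ κ ^ j * A :=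
  mul_le_mul_of_nonneg_right (pow_le_pow_right₀ hv.one_le hij) hA

lemma le_pow_mul (hv : IsQuasiUltrametric v κ) (j : ℕ) {A : ℝ} (hA : 0 ≤ A) : A ≤ κ ^ j * A :=
  le_mul_of_one_le_left hA (one_le_pow₀ hv.one_le)

lemma map_add_le (hv : IsQuasiUltrametric v κ) {a b : K} {A : ℝ} (ha : v a ≤ A) (hb : v b ≤ A) :
    v (a + b) ≤ κ * A :=
  (hv.map_add_le_mul_max a b).trans (mul_le_mul_of_nonneg_left (max_le ha hb) hv.pos.le)

lemma map_sub_le (hv : IsQuasiUltrametric v κ) {a b : K} {A : ℝ} (ha : v a ≤ A) (hb : v b ≤ A) :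
    v (a - b) ≤ κ * A := by
  rw [sub_eq_add_neg]
  exact hv.map_add_le ha (by rwa [v.map_neg])

lemma map_natCast_le (hv : IsQuasiUltrametric v κ) (k : ℕ) : v (k : K) ≤ κ ^ k := by
  induction k with
  | zero => simp
  | succ k ih =>
    rw [Nat.cast_succ, pow_succ']
    exact hv.map_add_le ih (by rw [v.map_one]; exact one_le_pow₀ hv.one_le)

lemma map_ofNat_le (hv : IsQuasiUltrametric v κ) (k : ℕ) [k.AtLeastTwo] :
    v (ofNat(k) : K) ≤ κ ^ k :=
  hv.map_natCast_le k

lemma map_intCast_le (hv : IsQuasiUltrametric v κ) {k : ℤ} {N : ℕ} (hk : k.natAbs ≤ N) :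
    v (k : K) ≤ κ ^ N := by
  have hnat : v (k : K) = v (k.natAbs : K) := by
    obtain ⟨m, rfl | rfl⟩ := k.eq_nat_or_neg <;> simp
  exact hnat ▸ (hv.map_natCast_le _).trans (pow_le_pow_right₀ hv.one_le hk)

variable {n : K}

lemma localSize_mul_localSize_le (hv : IsQuasiUltrametric v κ) (n x₁ x₂ : K) :
    localSize v n x₁ * localSize v n x₂ ≤
      κ * max (v (x₁ * x₂)) (localScale v n * localSize v n (x₁ + x₂)) := by
  set τ := localScale v n with hτ
  have hτ0 : 0 ≤ τ := localScale_nonneg v n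
  have hone : ∀ B : ℝ, 0 ≤ B → B ≤ κ * B := fun B hB ↦ le_mul_of_one_le_left hB hv.one_le
  -- If only `a` exceeds the scale, then `v a` is controlled by `v (a + b)`.
  have hmixed : ∀ a b : K, v b ≤ τ → τ * v a ≤ κ * (τ * localSize v n (a + b)) := by
    intro a b hb
    have ha : v (a + b - b) ≤ κ * localSize v n (a + b) :=
      hv.map_sub_le le_localSize (hb.trans localScale_le_localSize)
    rw [add_sub_cancel_right] at ha
    exact (mul_le_mul_of_nonneg_left ha hτ0).trans_eq (by ring)
  rw [mul_max_of_nonneg _ _ hv.pos.le, le_max_iff]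
  rcases le_total (v x₁) τ with h₁ | h₁ <;> rcases le_total (v x₂) τ with h₂ | h₂ <;>
    simp only [localSize, ← hτ, h₁, h₂, max_eq_left, max_eq_right]
  · right
    calc τ * τ ≤ τ * max (v (x₁ + x₂)) τ := by gcongr; exact le_max_right _ _
      _ ≤ _ := hone _ (by positivity)
  · right
    exact add_comm x₁ x₂ ▸ hmixed x₂ x₁ h₁
  · right
    exact mul_comm τ (v x₁) ▸ hmixed x₁ x₂ h₂
  · left
    rw [← v.map_mul]
    exact hone _ (v.nonneg _)

section Addition

variable {x₁ x₂ : K}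

lemma localScale_mul_map_add_le (hv : IsQuasiUltrametric v κ) (n x₁ x₂ : K) :
    localScale v n * v (x₁ + x₂) ≤ κ * (localSize v n x₁ * localSize v n x₂) := by
  have hτ : 0 ≤ localScale v n := localScale_nonneg v n
  have h₁ : localScale v n * v x₁ ≤ localSize v n x₁ * localSize v n x₂ :=
    mul_comm (localSize v n x₁) _ ▸
      mul_le_mul localScale_le_localSize le_localSize (v.nonneg _) localSize_nonneg
  have h₂ : localScale v n * v x₂ ≤ localSize v n x₁ * localSize v n x₂ :=
    mul_le_mul localScale_le_localSize le_localSize (v.nonneg _) localSize_nonneg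
  calc localScale v n * v (x₁ + x₂)
      ≤ localScale v n * (κ * max (v x₁) (v x₂)) := by gcongr; exact hv.map_add_le_mul_max _ _
    _ = κ * max (localScale v n * v x₁) (localScale v n * v x₂) := by
        rw [← mul_max_of_nonneg _ _ hτ]; ring
    _ ≤ _ := mul_le_mul_of_nonneg_left (max_le h₁ h₂) hv.pos.le

lemma localScale_mul_map_sub_le (hv : IsQuasiUltrametric v κ) (n x₁ x₂ : K) :
    localScale v n * v (x₁ - x₂) ≤ κ * (localSize v n x₁ * localSize v n x₂) := by
  simpa [localSize, sub_eq_add_neg] using hv.localScale_mul_map_add_le n x₁ (-x₂)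

lemma map_addSub_prod_le (hv : IsQuasiUltrametric v κ) (n x₁ x₂ : K) :
    v ((x₁ * x₂) ^ 2 - 4 * n * (x₁ + x₂)) ≤
      κ ^ 6 * (localSize v n x₁ * localSize v n x₂) ^ 2 := by
  have hE : 0 ≤ localSize v n x₁ * localSize v n x₂ := mul_nonneg localSize_nonneg localSize_nonneg
  calc _ ≤ κ * (κ ^ 5 * (localSize v n x₁ * localSize v n x₂) ^ 2) := by
        refine hv.map_sub_le ?_ ?_
        · rw [v.map_pow]
          exact (pow_le_pow_left₀ (v.nonneg _) (map_mul_le_localSize_mul v n x₁ x₂) 2).trans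
            (hv.le_pow_mul 5 (sq_nonneg _))
        · rw [v.map_mul, v.map_mul, ← localScale_pow_three v n]
          calc v 4 * localScale v n ^ 3 * v (x₁ + x₂)
              = v 4 * (localScale v n ^ 2 * (localScale v n * v (x₁ + x₂))) := by ring
            _ ≤ κ ^ 4 * (localSize v n x₁ * localSize v n x₂ *
                  (κ * (localSize v n x₁ * localSize v n x₂))) :=
                mul_le_mul (hv.map_ofNat_le 4)
                  (mul_le_mul (localScale_sq_le_localSize_mul v n x₁ x₂)
                    (hv.localScale_mul_map_add_le n x₁ x₂)
                    (mul_nonneg (localScale_nonneg v n) (v.nonneg _)) hE)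
                  (mul_nonneg (sq_nonneg _) (mul_nonneg (localScale_nonneg v n) (v.nonneg _)))
                  (pow_nonneg hv.pos.le 4)
            _ = _ := by ring
    _ = _ := by ring

lemma localScale_mul_map_addSub_sum_le (hv : IsQuasiUltrametric v κ) (n x₁ x₂ : K) :
    localScale v n * v (2 * (x₁ * x₂) * (x₁ + x₂) + 4 * n) ≤
      κ ^ 5 * (localSize v n x₁ * localSize v n x₂) ^ 2 := by
  have hτ : 0 ≤ localScale v n := localScale_nonneg v n
  have hE : 0 ≤ localSize v n x₁ * localSize v n x₂ := mul_nonneg localSize_nonneg localSize_nonneg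
  have hfirst : localScale v n * v (2 * (x₁ * x₂) * (x₁ + x₂)) ≤
      κ ^ 4 * (localSize v n x₁ * localSize v n x₂) ^ 2 := by
    rw [v.map_mul, v.map_mul]
    calc localScale v n * (v 2 * v (x₁ * x₂) * v (x₁ + x₂))
        = v 2 * v (x₁ * x₂) * (localScale v n * v (x₁ + x₂)) := by ring
      _ ≤ κ ^ 2 * (localSize v n x₁ * localSize v n x₂) *
            (κ * (localSize v n x₁ * localSize v n x₂)) :=
          mul_le_mul (mul_le_mul (hv.map_ofNat_le 2) (map_mul_le_localSize_mul v n x₁ x₂)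
            (v.nonneg _) (sq_nonneg _)) (hv.localScale_mul_map_add_le n x₁ x₂)
            (mul_nonneg hτ (v.nonneg _)) (mul_nonneg (sq_nonneg _) hE)
      _ = κ ^ 3 * (localSize v n x₁ * localSize v n x₂) ^ 2 := by ring
      _ ≤ _ := hv.pow_mul_le_pow_mul (by norm_num) (sq_nonneg _)
  have hsecond : localScale v n * v (4 * n) ≤
      κ ^ 4 * (localSize v n x₁ * localSize v n x₂) ^ 2 := by
    rw [v.map_mul, ← localScale_pow_three v n]
    calc localScale v n * (v 4 * localScale v n ^ 3) = v 4 * (localScale v n ^ 2) ^ 2 := by ring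
      _ ≤ _ := mul_le_mul (hv.map_ofNat_le 4)
          (pow_le_pow_left₀ (sq_nonneg _) (localScale_sq_le_localSize_mul v n x₁ x₂) 2)
          (sq_nonneg _) (pow_nonneg hv.pos.le 4)
  calc _ ≤ localScale v n * (κ * max (v (2 * (x₁ * x₂) * (x₁ + x₂))) (v (4 * n))) :=
        mul_le_mul_of_nonneg_left (hv.map_add_le_mul_max _ _) hτ
    _ = κ * max (localScale v n * v (2 * (x₁ * x₂) * (x₁ + x₂))) (localScale v n * v (4 * n)) := by
        rw [← mul_max_of_nonneg _ _ hτ]; ring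
    _ ≤ κ * (κ ^ 4 * (localSize v n x₁ * localSize v n x₂) ^ 2) :=
        mul_le_mul_of_nonneg_left (max_le hfirst hsecond) hv.pos.le
    _ = _ := by ring

theorem localSize_addSub_le (hv : IsQuasiUltrametric v κ) {x₃ x₄ : K}
    (hsum : (x₃ + x₄) * (x₁ - x₂) ^ 2 = 2 * (x₁ * x₂) * (x₁ + x₂) + 4 * n)
    (hprod : x₃ * x₄ * (x₁ - x₂) ^ 2 = (x₁ * x₂) ^ 2 - 4 * n * (x₁ + x₂)) :
    localSize v n x₃ * localSize v n x₄ * v ((x₁ - x₂) ^ 2) ≤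
      κ ^ 7 * (localSize v n x₁ * localSize v n x₂) ^ 2 := by
  set E := localSize v n x₁ * localSize v n x₂
  have hτ : 0 ≤ localScale v n := localScale_nonneg v n
  have hD : 0 ≤ v ((x₁ - x₂) ^ 2) := v.nonneg _
  have hP : v (x₃ * x₄) * v ((x₁ - x₂) ^ 2) ≤ κ ^ 6 * E ^ 2 := by
    rw [← v.map_mul, hprod]
    exact hv.map_addSub_prod_le n x₁ x₂
  have hS : localScale v n * localSize v n (x₃ + x₄) * v ((x₁ - x₂) ^ 2) ≤ κ ^ 6 * E ^ 2 := by
    rw [mul_assoc, localSize, max_mul_of_nonneg _ _ hD, mul_max_of_nonneg _ _ hτ, ← v.map_mul, hsum]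
    refine max_le ((hv.localScale_mul_map_addSub_sum_le n x₁ x₂).trans
      (hv.pow_mul_le_pow_mul (by norm_num) (sq_nonneg E))) ?_
    calc localScale v n * (localScale v n * v ((x₁ - x₂) ^ 2))
        = (localScale v n * v (x₁ - x₂)) ^ 2 := by rw [v.map_pow]; ring
      _ ≤ (κ * E) ^ 2 := pow_le_pow_left₀ (mul_nonneg hτ (v.nonneg _))
          (hv.localScale_mul_map_sub_le n x₁ x₂) 2
      _ = κ ^ 2 * E ^ 2 := by ring
      _ ≤ κ ^ 6 * E ^ 2 := hv.pow_mul_le_pow_mul (by norm_num) (sq_nonneg E)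
  calc _ ≤ κ * max (v (x₃ * x₄)) (localScale v n * localSize v n (x₃ + x₄)) *
          v ((x₁ - x₂) ^ 2) := mul_le_mul_of_nonneg_right (hv.localSize_mul_localSize_le n x₃ x₄) hD
    _ ≤ κ * (κ ^ 6 * E ^ 2) := by
        rw [mul_assoc, max_mul_of_nonneg _ _ hD]
        exact mul_le_mul_of_nonneg_left (max_le hP hS) hv.pos.le
    _ = κ ^ 7 * E ^ 2 := by ring

end Addition

section Doubling

variable {x x' : K}

lemma map_pow_three_add_le (hv : IsQuasiUltrametric v κ) {A : ℝ} (hx : v x ≤ A)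
    (hA : localScale v n ≤ A) : v (x ^ 3 + n) ≤ κ * A ^ 3 :=
  hv.map_add_le (by rw [v.map_pow]; exact pow_le_pow_left₀ (v.nonneg _) hx 3)
    (localScale_pow_three v n ▸ pow_le_pow_left₀ (localScale_nonneg v n) hA 3)

theorem localSize_double_le (hv : IsQuasiUltrametric v κ)
    (hdouble : x' * (4 * (x ^ 3 + n)) = x ^ 4 - 8 * n * x) :
    localSize v n x' * v (4 * (x ^ 3 + n)) ≤ κ ^ 9 * localSize v n x ^ 4 := by
  set M := localSize v n x
  have hM : 0 ≤ M := localSize_nonneg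
  have hxM : v x ≤ M := le_localSize
  have hnM : v n ≤ M ^ 3 := map_le_localSize_pow_three
  have h8 := hv.map_ofNat_le 8
  have h4 := hv.map_ofNat_le 4
  have hκ := hv.pos
  have hx := v.nonneg x
  rw [localSize, max_mul_of_nonneg _ _ (v.nonneg _), ← v.map_mul, hdouble]
  refine max_le ?_ ?_
  · calc _ ≤ κ * (κ ^ 8 * M ^ 4) := by
          refine hv.map_sub_le ?_ ?_
          · rw [v.map_pow]
            exact (pow_le_pow_left₀ hx hxM 4).trans (hv.le_pow_mul 8 (by positivity))
          · rw [v.map_mul, v.map_mul]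
            calc v 8 * v n * v x ≤ κ ^ 8 * M ^ 3 * M := by gcongr
              _ = _ := by ring
      _ = _ := by ring
  · rw [v.map_mul]
    calc _ ≤ M * (κ ^ 4 * (κ * M ^ 3)) := by
          gcongr
          · exact localScale_le_localSize
          · exact hv.map_pow_three_add_le hxM localScale_le_localSize
      _ = κ ^ 5 * M ^ 4 := by ring
      _ ≤ _ := hv.pow_mul_le_pow_mul (by norm_num) (by positivity)

variable {W : ℝ}

lemma localScale_pow_four_le_of_duplication (hv : IsQuasiUltrametric v κ) (hn : n ≠ 0)
    (hx : v x ≤ localScale v n) (hnum : v (x ^ 4 - 8 * n * x) ≤ W)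
    (hden : localScale v n * v (4 * (x ^ 3 + n)) ≤ W) :
    localScale v n ^ 4 * v 108 ≤ κ ^ 29 * W := by
  set τ := localScale v n with hτ_def
  have hτ : 0 < τ := localScale_pos hn
  have hW : 0 ≤ W := (v.nonneg _).trans hnum
  have hκ := hv.pos
  have h12 := hv.map_ofNat_le 12
  have h3 := hv.map_ofNat_le 3
  have h27 := hv.map_ofNat_le 27
  have hcoeff : v (3 * x ^ 3 - 27 * n) ≤ κ * (κ ^ 27 * τ ^ 3) := by
    refine hv.map_sub_le ?_ ?_
    · rw [v.map_mul, v.map_pow]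
      calc v 3 * v x ^ 3 ≤ κ ^ 3 * τ ^ 3 := by gcongr
        _ ≤ _ := hv.pow_mul_le_pow_mul (by norm_num) (by positivity)
    · rw [v.map_mul, ← localScale_pow_three v n]
      gcongr
  have hresultant : v (108 * n ^ 2) ≤ κ * (κ ^ 28 * τ ^ 2 * W) := by
    rw [show 108 * n ^ 2 = 12 * x ^ 2 * (x ^ 4 - 8 * n * x) -
      (3 * x ^ 3 - 27 * n) * (4 * (x ^ 3 + n)) by ring]
    refine hv.map_sub_le ?_ ?_
    · rw [v.map_mul, v.map_mul, v.map_pow, mul_assoc (κ ^ 28)]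
      calc v 12 * v x ^ 2 * v (x ^ 4 - 8 * n * x) ≤ κ ^ 12 * τ ^ 2 * W := by gcongr
        _ = κ ^ 12 * (τ ^ 2 * W) := by ring
        _ ≤ _ := hv.pow_mul_le_pow_mul (by norm_num) (by positivity)
    · rw [v.map_mul]
      calc _ ≤ κ * (κ ^ 27 * τ ^ 3) * v (4 * (x ^ 3 + n)) := by gcongr
        _ = κ ^ 28 * τ ^ 2 * (τ * v (4 * (x ^ 3 + n))) := by ring
        _ ≤ κ ^ 28 * τ ^ 2 * W := by gcongr
  rw [v.map_mul, v.map_pow, ← localScale_pow_three v n, ← hτ_def] at hresultant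
  refine le_of_mul_le_mul_left (a := τ ^ 2) ?_ (by positivity)
  calc τ ^ 2 * (τ ^ 4 * v 108) = v 108 * (τ ^ 3) ^ 2 := by ring
    _ ≤ κ * (κ ^ 28 * τ ^ 2 * W) := hresultant
    _ = τ ^ 2 * (κ ^ 29 * W) := by ring

lemma map_pow_four_le_of_duplication (hv : IsQuasiUltrametric v κ) (hn : n ≠ 0)
    (hx : localScale v n ≤ v x) (hnum : v (x ^ 4 - 8 * n * x) ≤ W)
    (hden : localScale v n * v (4 * (x ^ 3 + n)) ≤ W) :
    v x ^ 4 * v 108 ≤ κ ^ 193 * W := by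
  set τ := localScale v n with hτ_def
  have hτ : 0 < τ := localScale_pos hn
  have hx0 : 0 < v x := hτ.trans_le hx
  have hW : 0 ≤ W := (v.nonneg _).trans hnum
  have hκ := hv.pos
  have h12 := hv.map_ofNat_le 12
  have h9 := hv.map_ofNat_le 9
  have h8 := hv.map_ofNat_le 8
  have h192 := hv.map_ofNat_le 192
  have hcoeff : v (9 * x ^ 3 + 8 * n) ≤ κ * (κ ^ 9 * v x ^ 3) := by
    refine hv.map_add_le ?_ ?_
    · rw [v.map_mul, v.map_pow]
      gcongr
    · rw [v.map_mul, ← localScale_pow_three v n, ← hτ_def]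
      calc v 8 * τ ^ 3 ≤ κ ^ 8 * v x ^ 3 := by gcongr
        _ ≤ _ := hv.pow_mul_le_pow_mul (by norm_num) (by positivity)
  have hresultant : v (108 * x ^ 7) ≤ κ * (κ ^ 192 * (v x ^ 3 * W)) := by
    rw [show 108 * x ^ 7 = 12 * (9 * x ^ 3 + 8 * n) * (x ^ 4 - 8 * n * x) +
      192 * n * x * (4 * (x ^ 3 + n)) by ring]
    refine hv.map_add_le ?_ ?_
    · rw [v.map_mul, v.map_mul]
      calc _ ≤ κ ^ 12 * (κ * (κ ^ 9 * v x ^ 3)) * W := by gcongr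
        _ = κ ^ 22 * (v x ^ 3 * W) := by ring
        _ ≤ _ := hv.pow_mul_le_pow_mul (by norm_num) (by positivity)
    · rw [v.map_mul, v.map_mul, v.map_mul, ← localScale_pow_three v n, ← hτ_def]
      calc v 192 * τ ^ 3 * v x * v (4 * (x ^ 3 + n))
          = v 192 * (τ ^ 2 * v x * (τ * v (4 * (x ^ 3 + n)))) := by ring
        _ ≤ κ ^ 192 * (v x ^ 2 * v x * W) := by gcongr
        _ = _ := by ring
  rw [v.map_mul, v.map_pow] at hresultant
  refine le_of_mul_le_mul_left (a := v x ^ 3) ?_ (by positivity)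
  calc v x ^ 3 * (v x ^ 4 * v 108) = v 108 * v x ^ 7 := by ring
    _ ≤ κ * (κ ^ 192 * (v x ^ 3 * W)) := hresultant
    _ = v x ^ 3 * (κ ^ 193 * W) := by ring

theorem localSize_pow_four_le_double (hv : IsQuasiUltrametric v κ) (hn : n ≠ 0)
    (hdouble : x' * (4 * (x ^ 3 + n)) = x ^ 4 - 8 * n * x) :
    localSize v n x ^ 4 * v 108 ≤ κ ^ 193 * (localSize v n x' * v (4 * (x ^ 3 + n))) := by
  have hnum : v (x ^ 4 - 8 * n * x) ≤ localSize v n x' * v (4 * (x ^ 3 + n)) := by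
    rw [← hdouble, v.map_mul]
    exact mul_le_mul_of_nonneg_right le_localSize (v.nonneg _)
  have hden : localScale v n * v (4 * (x ^ 3 + n)) ≤ localSize v n x' * v (4 * (x ^ 3 + n)) :=
    mul_le_mul_of_nonneg_right localScale_le_localSize (v.nonneg _)
  rcases le_total (v x) (localScale v n) with hx | hx
  · rw [localSize, max_eq_right hx]
    exact (hv.localScale_pow_four_le_of_duplication hn hx hnum hden).trans
      (hv.pow_mul_le_pow_mul (by norm_num) ((v.nonneg _).trans hnum))
  · rw [localSize, max_eq_left hx]
    exact hv.map_pow_four_le_of_duplication hn hx hnum hden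

end Doubling

end IsQuasiUltrametric

/-- An integral relation `l₀ u₀ = l₁ u₁ + l₂ u₂` with `l₀ ≠ 0` and coefficients at most `N`, such as
any three among the first `N` terms of an arithmetic progression satisfy. -/
def HasSmallRelation {K : Type*} [Field K] (N : ℕ) (u₀ u₁ u₂ : K) : Prop :=
  ∃ l₀ l₁ l₂ : ℤ, (l₀ : K) ≠ 0 ∧ l₀.natAbs ≤ N ∧ l₁.natAbs ≤ N ∧ l₂.natAbs ≤ N ∧
    l₀ * u₀ = l₁ * u₁ + l₂ * u₂

namespace IsQuasiUltrametric

variable {K : Type*} [Field K] {v : AbsoluteValue K ℝ} {κ : ℝ} {n : K}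

section SmallRelation

variable {x y x₁ y₁ x₂ y₂ : K} {N : ℕ}

lemma map_mul_le_of_relation (hv : IsQuasiUltrametric v κ) {u₀ u₁ u₂ : K} {l₀ l₁ l₂ : ℤ}
    (hl₁ : l₁.natAbs ≤ N) (hl₂ : l₂.natAbs ≤ N) (hrel : l₀ * u₀ = l₁ * u₁ + l₂ * u₂) {B : ℝ}
    (h₁ : v u₁ ≤ B) (h₂ : v u₂ ≤ B) : v l₀ * v u₀ ≤ κ ^ (N + 1) * B := by
  have hκ := pow_nonneg hv.pos.le N
  have hterm : ∀ {l : ℤ} {u : K}, l.natAbs ≤ N → v u ≤ B → v (l * u) ≤ κ ^ N * B :=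
    fun hl hu ↦ by
      rw [v.map_mul]
      exact mul_le_mul (hv.map_intCast_le hl) hu (v.nonneg _) hκ
  rw [← v.map_mul, hrel, pow_succ', mul_assoc]
  exact hv.map_add_le (hterm hl₁ h₁) (hterm hl₂ h₂)

lemma localSize_pow_three_le (hv : IsQuasiUltrametric v κ) (heq : y ^ 2 = x ^ 3 + n) :
    localSize v n x ^ 3 ≤ κ * max (v y ^ 2) (localScale v n ^ 3) := by
  rcases le_total (v x) (localScale v n) with hx | hx
  · rw [localSize, max_eq_right hx]
    exact (le_max_right _ _).trans (le_mul_of_one_le_left (by positivity) hv.one_le)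
  · rw [localSize, max_eq_left hx, ← v.map_pow, show x ^ 3 = y ^ 2 - n by rw [heq]; ring]
    exact hv.map_sub_le (by rw [v.map_pow]; exact le_max_left _ _)
      (localScale_pow_three v n ▸ le_max_right _ _)

variable {l₀ l₁ l₂ : ℤ} {A : ℝ}

lemma localSize_pow_three_mul_le_of_x_relation (hv : IsQuasiUltrametric v κ)
    (hl₀ : l₀.natAbs ≤ N) (hl₁ : l₁.natAbs ≤ N) (hl₂ : l₂.natAbs ≤ N)
    (hrel : l₀ * x = l₁ * x₁ + l₂ * x₂) (hA : localScale v n ≤ A)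
    (hx : v x ≤ A ∨ v x₁ ≤ A ∧ v x₂ ≤ A) :
    localSize v n x ^ 3 * v ((l₀ : K) ^ 3) ≤ κ ^ (3 * N + 4) * A ^ 3 := by
  have hA0 : 0 ≤ A := (localScale_nonneg v n).trans hA
  have hκ := hv.pos
  have hl₀κ : v (l₀ : K) ≤ κ ^ (N + 1) :=
    (hv.map_intCast_le hl₀).trans (pow_le_pow_right₀ hv.one_le N.le_succ)
  have hone : localSize v n x * v (l₀ : K) ≤ κ ^ (N + 1) * A := by
    rw [localSize, mul_comm, mul_max_of_nonneg _ _ (v.nonneg _)]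
    refine max_le ?_ (mul_le_mul hl₀κ hA (localScale_nonneg v n) (by positivity))
    rcases hx with hx | ⟨hx₁, hx₂⟩
    · exact mul_le_mul hl₀κ hx (v.nonneg _) (by positivity)
    · exact hv.map_mul_le_of_relation hl₁ hl₂ hrel hx₁ hx₂
  calc localSize v n x ^ 3 * v ((l₀ : K) ^ 3) = (localSize v n x * v (l₀ : K)) ^ 3 := by
        rw [v.map_pow]; ring
    _ ≤ (κ ^ (N + 1) * A) ^ 3 := pow_le_pow_left₀ (mul_nonneg localSize_nonneg (v.nonneg _)) hone 3
    _ = κ ^ (3 * N + 3) * A ^ 3 := by ring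
    _ ≤ _ := hv.pow_mul_le_pow_mul (by omega) (by positivity)

lemma localSize_pow_three_mul_le_of_y_relation (hv : IsQuasiUltrametric v κ)
    (heq : y ^ 2 = x ^ 3 + n) (heq₁ : y₁ ^ 2 = x₁ ^ 3 + n) (heq₂ : y₂ ^ 2 = x₂ ^ 3 + n)
    (hl₀ : l₀.natAbs ≤ N) (hl₁ : l₁.natAbs ≤ N) (hl₂ : l₂.natAbs ≤ N)
    (hrel : l₀ * y = l₁ * y₁ + l₂ * y₂) (hA : localScale v n ≤ A)
    (hx : v x ≤ A ∨ v x₁ ≤ A ∧ v x₂ ≤ A) :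
    localSize v n x ^ 3 * v ((l₀ : K) ^ 2) ≤ κ ^ (3 * N + 4) * A ^ 3 := by
  have hA0 : 0 ≤ A := (localScale_nonneg v n).trans hA
  have hκ := hv.pos
  have hl₀κ : v (l₀ : K) ≤ κ ^ (N + 1) :=
    (hv.map_intCast_le hl₀).trans (pow_le_pow_right₀ hv.one_le N.le_succ)
  have hsqrt : ∀ {s t : K}, t ^ 2 = s ^ 3 + n → v s ≤ A → v t ≤ √(κ * A ^ 3) := fun hst hs ↦
    le_sqrt_of_sq_le (by rw [← v.map_pow, hst]; exact hv.map_pow_three_add_le hs hA)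
  have hone : v (l₀ : K) * v y ≤ κ ^ (N + 1) * √(κ * A ^ 3) := by
    rcases hx with hx | ⟨hx₁, hx₂⟩
    · exact mul_le_mul hl₀κ (hsqrt heq hx) (v.nonneg _) (by positivity)
    · exact hv.map_mul_le_of_relation hl₁ hl₂ hrel (hsqrt heq₁ hx₁) (hsqrt heq₂ hx₂)
  have hmax : v (l₀ : K) ^ 2 * max (v y ^ 2) (localScale v n ^ 3) ≤ κ ^ (2 * N + 3) * A ^ 3 := by
    rw [mul_max_of_nonneg _ _ (sq_nonneg _)]
    refine max_le ?_ ?_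
    · calc v (l₀ : K) ^ 2 * v y ^ 2 = (v (l₀ : K) * v y) ^ 2 := by ring
        _ ≤ (κ ^ (N + 1) * √(κ * A ^ 3)) ^ 2 :=
            pow_le_pow_left₀ (mul_nonneg (v.nonneg _) (v.nonneg _)) hone 2
        _ = κ ^ (2 * N + 3) * A ^ 3 := by rw [mul_pow, sq_sqrt (by positivity)]; ring
    · calc v (l₀ : K) ^ 2 * localScale v n ^ 3 ≤ (κ ^ (N + 1)) ^ 2 * A ^ 3 :=
            mul_le_mul (pow_le_pow_left₀ (v.nonneg _) hl₀κ 2)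
              (pow_le_pow_left₀ (localScale_nonneg v n) hA 3)
              (pow_nonneg (localScale_nonneg v n) 3) (by positivity)
        _ = κ ^ (2 * N + 2) * A ^ 3 := by ring
        _ ≤ _ := hv.pow_mul_le_pow_mul (by omega) (by positivity)
  calc localSize v n x ^ 3 * v ((l₀ : K) ^ 2)
      ≤ κ * max (v y ^ 2) (localScale v n ^ 3) * v ((l₀ : K) ^ 2) :=
        mul_le_mul_of_nonneg_right (hv.localSize_pow_three_le heq) (v.nonneg _)
    _ = κ * (v (l₀ : K) ^ 2 * max (v y ^ 2) (localScale v n ^ 3)) := by rw [v.map_pow]; ring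
    _ ≤ κ * (κ ^ (2 * N + 3) * A ^ 3) := mul_le_mul_of_nonneg_left hmax hκ.le
    _ = κ ^ (2 * N + 4) * A ^ 3 := by ring
    _ ≤ _ := hv.pow_mul_le_pow_mul (by omega) (by positivity)

end SmallRelation

section Near

variable {x y a b x' : K} {A : ℝ}

lemma map_le_mul_map_sub (hv : IsQuasiUltrametric v κ) (ha : v a ≤ A) (hx : κ * A < v x) :
    v x ≤ κ * v (x - a) := by
  have hadd := hv.map_add_le_mul_max (x - a) a
  rw [sub_add_cancel, mul_max_of_nonneg _ _ hv.pos.le, le_max_iff] at hadd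
  refine hadd.resolve_right fun h ↦ ?_
  exact absurd (h.trans (mul_le_mul_of_nonneg_left ha hv.pos.le)) hx.not_ge

lemma map_mul_y_le (hv : IsQuasiUltrametric v κ) (hP : y ^ 2 = x ^ 3 + n)
    (hQ : b ^ 2 = a ^ 3 + n) (hA : localScale v n ≤ A) (ha : v a ≤ A) (hx : A ≤ v x) :
    v b * v y ≤ κ * (A * v x ^ 2) := by
  have hA0 : 0 ≤ A := (localScale_nonneg v n).trans hA
  have hκ := hv.pos
  have hb : v b ^ 2 ≤ κ * A ^ 3 := by
    rw [← v.map_pow, hQ]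
    exact hv.map_pow_three_add_le ha hA
  have hy : v y ^ 2 ≤ κ * v x ^ 3 := by
    rw [← v.map_pow, hP]
    exact hv.map_pow_three_add_le le_rfl (hA.trans hx)
  refine abs_le_of_sq_le_sq' ?_ (by positivity) |>.2
  calc (v b * v y) ^ 2 = v b ^ 2 * v y ^ 2 := by ring
    _ ≤ (κ * A ^ 3) * (κ * v x ^ 3) := by gcongr
    _ = κ ^ 2 * A ^ 2 * v x ^ 3 * A := by ring
    _ ≤ κ ^ 2 * A ^ 2 * v x ^ 3 * v x := by gcongr
    _ = (κ * (A * v x ^ 2)) ^ 2 := by ring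

lemma map_addX_num_le (hv : IsQuasiUltrametric v κ) (hP : y ^ 2 = x ^ 3 + n)
    (hQ : b ^ 2 = a ^ 3 + n) (hA : localScale v n ≤ A) (ha : v a ≤ A) (hx : A ≤ v x) :
    v (a * x ^ 2 + a ^ 2 * x + 2 * n - 2 * (b * y)) ≤ κ ^ 4 * (A * v x ^ 2) := by
  have hA0 : 0 ≤ A := (localScale_nonneg v n).trans hA
  have hκ := hv.pos
  have hτ := localScale_nonneg v n
  have h2 := hv.map_ofNat_le 2
  have hxx : v (a * x ^ 2) ≤ A * v x ^ 2 := by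
    rw [v.map_mul, v.map_pow]
    gcongr
  have hax : v (a ^ 2 * x) ≤ A * v x ^ 2 := by
    rw [v.map_mul, v.map_pow]
    calc v a ^ 2 * v x ≤ A ^ 2 * v x := by gcongr
      _ = A * v x * A := by ring
      _ ≤ A * v x * v x := by gcongr
      _ = A * v x ^ 2 := by ring
  have hn2 : v (2 * n) ≤ κ ^ 2 * (A * v x ^ 2) := by
    rw [v.map_mul, ← localScale_pow_three v n]
    calc v 2 * localScale v n ^ 3 ≤ κ ^ 2 * A ^ 3 := by gcongr
      _ = κ ^ 2 * (A * A ^ 2) := by ring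
      _ ≤ κ ^ 2 * (A * v x ^ 2) := by gcongr
  have hby : v (2 * (b * y)) ≤ κ ^ 3 * (A * v x ^ 2) := by
    rw [v.map_mul, v.map_mul]
    calc v 2 * (v b * v y) ≤ κ ^ 2 * (κ * (A * v x ^ 2)) :=
          mul_le_mul h2 (hv.map_mul_y_le hP hQ hA ha hx)
            (mul_nonneg (v.nonneg _) (v.nonneg _)) (by positivity)
      _ = κ ^ 3 * (A * v x ^ 2) := by ring
  have hsum₂ : v (a * x ^ 2 + a ^ 2 * x) ≤ κ ^ 2 * (A * v x ^ 2) :=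
    (hv.map_add_le hxx hax).trans
      (by simpa using hv.pow_mul_le_pow_mul one_le_two (by positivity : 0 ≤ A * v x ^ 2))
  have hsum₃ : v (a * x ^ 2 + a ^ 2 * x + 2 * n) ≤ κ ^ 3 * (A * v x ^ 2) :=
    (hv.map_add_le hsum₂ hn2).trans_eq (by ring)
  exact (hv.map_sub_le hsum₃ hby).trans_eq (by ring)

-- A point `v`-adically close to infinity moves `(a, b)` only a little.
theorem map_addX_le_of_near_infinity (hv : IsQuasiUltrametric v κ) (hP : y ^ 2 = x ^ 3 + n)
    (hQ : b ^ 2 = a ^ 3 + n)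
    (hadd : x' * (x - a) ^ 2 = a * x ^ 2 + a ^ 2 * x + 2 * n - 2 * (b * y))
    (hA : localScale v n ≤ A) (ha : v a ≤ A) (hx : κ * A < v x) : v x' ≤ κ ^ 6 * A := by
  have hA0 : 0 ≤ A := (localScale_nonneg v n).trans hA
  have hκ := hv.pos
  have hAx : A ≤ v x := (le_mul_of_one_le_left hA0 hv.one_le).trans hx.le
  have hx0 : 0 < v x := (mul_nonneg hκ.le hA0).trans_lt hx
  refine le_of_mul_le_mul_right (a := v x ^ 2) ?_ (by positivity)
  calc v x' * v x ^ 2 ≤ v x' * (κ * v (x - a)) ^ 2 := by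
        gcongr
        exact hv.map_le_mul_map_sub ha hx
    _ = κ ^ 2 * v (x' * (x - a) ^ 2) := by rw [v.map_mul, v.map_pow]; ring
    _ ≤ κ ^ 2 * (κ ^ 4 * (A * v x ^ 2)) := by
        rw [hadd]
        gcongr
        exact hv.map_addX_num_le hP hQ hA ha hAx
    _ = κ ^ 6 * A * v x ^ 2 := by ring

end Near

end IsQuasiUltrametric

section HeightInequalities

variable {K : Type*} [Field K] [AdmissibleAbsValues K] {n : K}

lemma mordellHeight_nonneg (n x : K) : 0 ≤ mordellHeight n x :=
  zero_le_logHeight₁ _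

lemma mordellHeight_zero (n : K) : mordellHeight n 0 = 0 := by
  simp [mordellHeight]

lemma mordellHeight_eq_zero_of_pow_three_eq_neg (hn : n ≠ 0) {x : K} (hx : x ^ 3 + n = 0) :
    mordellHeight n x = 0 := by
  rw [mordellHeight, eq_neg_of_add_eq_zero_left hx, neg_div, div_self hn, logHeight₁_neg,
    logHeight₁_one]

lemma mordellHeight_addSub_le (hn : n ≠ 0) {x₁ x₂ x₃ x₄ : K} (hx : x₁ ≠ x₂)
    (hsum : (x₃ + x₄) * (x₁ - x₂) ^ 2 = 2 * (x₁ * x₂) * (x₁ + x₂) + 4 * n)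
    (hprod : x₃ * x₄ * (x₁ - x₂) ^ 2 = (x₁ * x₂) ^ 2 - 4 * n * (x₁ + x₂)) :
    mordellHeight n x₃ + mordellHeight n x₄ ≤
      2 * (mordellHeight n x₁ + mordellHeight n x₂) + 21 * (totalWeight K * log 2) := by
  have h := sum_mordellHeight_le_of_local hn (l := [x₃, x₄]) (r := [x₁, x₁, x₂, x₂])
    (pow_ne_zero 2 (sub_ne_zero.2 hx)) (m := 7) fun v κ hv ↦ by
      simp only [List.map_cons, List.map_nil, List.prod_cons, List.prod_nil]
      exact (le_of_eq (by ring)).trans ((hv.localSize_addSub_le hsum hprod).trans_eq (by ring))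
  simp only [List.map_cons, List.map_nil, List.sum_cons, List.sum_nil] at h
  push_cast at h
  linarith

section Duplication

variable {x x' : K} (hn : n ≠ 0) (hx : 4 * (x ^ 3 + n) ≠ 0)
  (hdouble : x' * (4 * (x ^ 3 + n)) = x ^ 4 - 8 * n * x)
include hn hx hdouble

lemma mordellHeight_double_le :
    mordellHeight n x' ≤ 4 * mordellHeight n x + 27 * (totalWeight K * log 2) := by
  have h := sum_mordellHeight_le_of_local hn (l := [x']) (r := [x, x, x, x]) hx (m := 9)
    fun v κ hv ↦ by
      simpa [pow_succ, mul_assoc] using hv.localSize_double_le hdouble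
  simp only [List.map_cons, List.map_nil, List.sum_cons, List.sum_nil] at h
  push_cast at h
  linarith

lemma four_mul_mordellHeight_le (h108 : (108 : K) ≠ 0) :
    4 * mordellHeight n x ≤ mordellHeight n x' + 579 * (totalWeight K * log 2) := by
  have h := sum_mordellHeight_le_of_local hn (l := [x, x, x, x]) (r := [x'])
    (div_ne_zero h108 hx) (m := 193) fun v κ hv ↦ by
      have hlocal := hv.localSize_pow_four_le_double hn hdouble
      rw [← mul_assoc, ← div_le_iff₀ (v.pos hx), mul_div_assoc, ← map_div₀] at hlocal
      simp only [List.map_cons, List.map_nil, List.prod_cons, List.prod_nil]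
      exact (le_of_eq (by ring)).trans (hlocal.trans_eq (by ring))
  simp only [List.map_cons, List.map_nil, List.sum_cons, List.sum_nil] at h
  push_cast at h
  linarith

end Duplication

lemma mordellHeight_le_add_of_local (hn : n ≠ 0) {x a₁ a₂ s : K} (hs : s ≠ 0) {m : ℕ}
    (h : ∀ v κ, IsQuasiUltrametric v κ → localSize v n x ^ 3 * v s ≤
      κ ^ m * max (localSize v n a₁) (localSize v n a₂) ^ 3) :
    mordellHeight n x ≤
      mordellHeight n a₁ + mordellHeight n a₂ + m * (totalWeight K * log 2) := by
  have hlist := sum_mordellHeight_le_of_local hn (l := [x, x, x, 0, 0, 0])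
    (r := [a₁, a₁, a₁, a₂, a₂, a₂]) hs (m := m) fun v κ hv ↦ by
      have hτ := localScale_nonneg v n
      have hκ := hv.pos
      have hmax : 0 ≤ max (localSize v n a₁) (localSize v n a₂) :=
        localSize_nonneg.trans (le_max_left _ _)
      simp only [List.map_cons, List.map_nil, List.prod_cons, List.prod_nil, localSize_zero]
      calc _ = localSize v n x ^ 3 * v s * localScale v n ^ 3 := by ring
        _ ≤ κ ^ m * max (localSize v n a₁) (localSize v n a₂) ^ 3 * localScale v n ^ 3 :=
            mul_le_mul_of_nonneg_right (h v κ hv) (by positivity)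
        _ = κ ^ m * (max (localSize v n a₁) (localSize v n a₂) * localScale v n) ^ 3 := by ring
        _ ≤ κ ^ m * (localSize v n a₁ * localSize v n a₂) ^ 3 := by
            gcongr _ * ?_ ^ 3
            exact max_localSize_mul_localScale_le v n a₁ a₂
        _ = _ := by ring
  simp only [List.map_cons, List.map_nil, List.sum_cons, List.sum_nil, mordellHeight_zero] at hlist
  linarith

section SmallRelation

variable {x y x₁ y₁ x₂ y₂ : K} {N : ℕ} (hP : y ^ 2 = x ^ 3 + n) (hP₁ : y₁ ^ 2 = x₁ ^ 3 + n)
  (hP₂ : y₂ ^ 2 = x₂ ^ 3 + n) (hrel : HasSmallRelation N x x₁ x₂ ∨ HasSmallRelation N y y₁ y₂)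
include hP hP₁ hP₂ hrel

omit [AdmissibleAbsValues K] in
lemma exists_localSize_pow_three_mul_le : ∃ s : K, s ≠ 0 ∧
    ∀ v κ, IsQuasiUltrametric v κ → ∀ A, localScale v n ≤ A →
      (v x ≤ A ∨ v x₁ ≤ A ∧ v x₂ ≤ A) →
      localSize v n x ^ 3 * v s ≤ κ ^ (3 * N + 4) * A ^ 3 := by
  rcases hrel with ⟨l₀, l₁, l₂, hl, hl₀, hl₁, hl₂, h⟩ | ⟨l₀, l₁, l₂, hl, hl₀, hl₁, hl₂, h⟩
  · exact ⟨l₀ ^ 3, pow_ne_zero 3 hl, fun v κ hv A ↦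
      hv.localSize_pow_three_mul_le_of_x_relation hl₀ hl₁ hl₂ h⟩
  · exact ⟨l₀ ^ 2, pow_ne_zero 2 hl, fun v κ hv A ↦
      hv.localSize_pow_three_mul_le_of_y_relation hP hP₁ hP₂ hl₀ hl₁ hl₂ h⟩

lemma mordellHeight_le_of_hasSmallRelation (hn : n ≠ 0) :
    mordellHeight n x ≤ mordellHeight n x₁ + mordellHeight n x₂ +
      (3 * N + 4 : ℕ) * (totalWeight K * log 2) := by
  obtain ⟨s, hs, hlocal⟩ := exists_localSize_pow_three_mul_le hP hP₁ hP₂ hrel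
  exact mordellHeight_le_add_of_local hn hs fun v κ hv ↦ hlocal v κ hv _
    (localScale_le_localSize.trans (le_max_left _ _))
    (.inr ⟨le_localSize.trans (le_max_left _ _), le_localSize.trans (le_max_right _ _)⟩)

-- Where `x` is large compared with the `aᵢ`, the points `(xᵢ, yᵢ) = (x, y) + (aᵢ, bᵢ)` are close to
-- `(aᵢ, bᵢ)`, so that the relation prevents `x` from being large.
lemma mordellHeight_le_of_hasSmallRelation_add (hn : n ≠ 0) {a₁ b₁ a₂ b₂ : K}
    (hQ₁ : b₁ ^ 2 = a₁ ^ 3 + n) (hQ₂ : b₂ ^ 2 = a₂ ^ 3 + n)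
    (hadd₁ : x₁ * (x - a₁) ^ 2 = a₁ * x ^ 2 + a₁ ^ 2 * x + 2 * n - 2 * (b₁ * y))
    (hadd₂ : x₂ * (x - a₂) ^ 2 = a₂ * x ^ 2 + a₂ ^ 2 * x + 2 * n - 2 * (b₂ * y)) :
    mordellHeight n x ≤ mordellHeight n a₁ + mordellHeight n a₂ +
      (3 * N + 22 : ℕ) * (totalWeight K * log 2) := by
  obtain ⟨s, hs, hlocal⟩ := exists_localSize_pow_three_mul_le hP hP₁ hP₂ hrel
  refine mordellHeight_le_add_of_local hn hs fun v κ hv ↦ ?_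
  set A := max (localSize v n a₁) (localSize v n a₂)
  have hτA : localScale v n ≤ A := localScale_le_localSize.trans (le_max_left _ _)
  have hA : 0 ≤ A := (localScale_nonneg v n).trans hτA
  have hnear : v x ≤ κ ^ 6 * A ∨ v x₁ ≤ κ ^ 6 * A ∧ v x₂ ≤ κ ^ 6 * A := by
    rcases le_or_gt (v x) (κ * A) with hx | hx
    · exact .inl (hx.trans (by simpa using hv.pow_mul_le_pow_mul (i := 1) (j := 6) (by simp) hA))
    · exact .inr ⟨hv.map_addX_le_of_near_infinity hP hQ₁ hadd₁ hτA
          (le_localSize.trans (le_max_left _ _)) hx,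
        hv.map_addX_le_of_near_infinity hP hQ₂ hadd₂ hτA
          (le_localSize.trans (le_max_right _ _)) hx⟩
  calc _ ≤ κ ^ (3 * N + 4) * (κ ^ 6 * A) ^ 3 :=
        hlocal v κ hv _ (hτA.trans (hv.le_pow_mul 6 hA)) hnear
    _ = κ ^ (3 * N + 22) * A ^ 3 := by ring

end SmallRelation

end HeightInequalities

namespace MordellCurve

open WeierstrassCurve
open WeierstrassCurve.Affine (Point)

variable {n : ℤ}

lemma equation_of_nonsingular {x y : ℚ} (h : (MordellCurve n).toAffine.Nonsingular x y) :
    y ^ 2 = x ^ 3 + n := by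
  have heq := h.1
  rw [Affine.equation_iff] at heq
  simp only [MordellCurve] at heq
  linarith

lemma nonsingular_iff (hn : n ≠ 0) {x y : ℚ} :
    (MordellCurve n).toAffine.Nonsingular x y ↔ y ^ 2 = x ^ 3 + n := by
  refine ⟨equation_of_nonsingular, fun h ↦ ?_⟩
  rw [Affine.nonsingular_iff, Affine.equation_iff]
  simp only [MordellCurve]
  refine ⟨by linarith, ?_⟩
  by_contra! hsing
  have hx : x = 0 := by
    have : x ^ 2 = 0 := by linarith
    exact pow_eq_zero_iff two_ne_zero |>.1 this
  have hy : y = 0 := by linarith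
  refine hn (Int.cast_injective (α := ℚ) ?_)
  simpa [hx, hy] using h.symm

section GroupLaw

lemma negY_eq (x y : ℚ) : (MordellCurve n).toAffine.negY x y = -y := by
  simp [Affine.negY, MordellCurve]

lemma neg_some {x y : ℚ} (h : (MordellCurve n).toAffine.Nonsingular x y) :
    ∃ h', -Point.some x y h = Point.some x (-y) h' := by
  have h' := (Affine.nonsingular_neg (W' := (MordellCurve n).toAffine) x y).2 h
  rw [negY_eq] at h'
  refine ⟨h', ?_⟩
  rw [Point.neg_some]
  simp only [negY_eq]

lemma add_some_of_X_ne {x₁ y₁ x₂ y₂ : ℚ} (h₁ : (MordellCurve n).toAffine.Nonsingular x₁ y₁)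
    (h₂ : (MordellCurve n).toAffine.Nonsingular x₂ y₂) (hx : x₁ ≠ x₂) :
    ∃ y₃ h₃, Point.some x₁ y₁ h₁ + Point.some x₂ y₂ h₂ =
      Point.some (((y₁ - y₂) / (x₁ - x₂)) ^ 2 - x₁ - x₂) y₃ h₃ := by
  have hX : (MordellCurve n).toAffine.addX x₁ x₂
      ((MordellCurve n).toAffine.slope x₁ x₂ y₁ y₂) =
        ((y₁ - y₂) / (x₁ - x₂)) ^ 2 - x₁ - x₂ := by
    rw [Affine.slope_of_X_ne hx]
    simp [Affine.addX, MordellCurve]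
  rw [Point.add_of_X_ne hx, ← hX]
  exact ⟨_, _, rfl⟩

lemma add_self_some {x y : ℚ} (h : (MordellCurve n).toAffine.Nonsingular x y) (hy : y ≠ 0) :
    ∃ y' h', Point.some x y h + Point.some x y h =
      Point.some ((3 * x ^ 2 / (2 * y)) ^ 2 - x - x) y' h' := by
  have hy' : y ≠ (MordellCurve n).toAffine.negY x y := by
    rw [negY_eq]
    exact fun hneg ↦ hy (self_eq_neg.1 hneg)
  have hX : (MordellCurve n).toAffine.addX x x ((MordellCurve n).toAffine.slope x x y y) =
      (3 * x ^ 2 / (2 * y)) ^ 2 - x - x := by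
    rw [Affine.slope_of_Y_ne rfl hy', negY_eq]
    simp [Affine.addX, MordellCurve, two_mul]
  rw [Point.add_self_of_Y_ne hy', ← hX]
  exact ⟨_, _, rfl⟩

lemma some_add_some_neg {x y₁ y₂ : ℚ} (h₁ : (MordellCurve n).toAffine.Nonsingular x y₁)
    (h₂ : (MordellCurve n).toAffine.Nonsingular x y₂) (hy : y₁ = -y₂) :
    Point.some x y₁ h₁ + Point.some x y₂ h₂ = 0 :=
  Point.add_of_Y_eq rfl (by rw [negY_eq, hy])

lemma eq_or_eq_neg_of_X_eq {x y₁ y₂ : ℚ} (h₁ : (MordellCurve n).toAffine.Nonsingular x y₁)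
    (h₂ : (MordellCurve n).toAffine.Nonsingular x y₂) :
    Point.some x y₁ h₁ = Point.some x y₂ h₂ ∨ Point.some x y₁ h₁ = -Point.some x y₂ h₂ := by
  have hsq := (equation_of_nonsingular h₁).trans (equation_of_nonsingular h₂).symm
  rcases sq_eq_sq_iff_eq_or_eq_neg.1 hsq with rfl | hy
  · exact .inl rfl
  · exact .inr (eq_neg_of_add_eq_zero_left (some_add_some_neg h₁ h₂ hy))

lemma addX_mul_sub_sq {x y a b x' y' : ℚ} {h h₁ h₂}
    (hadd : (Point.some x y h : (MordellCurve n).toAffine.Point) + Point.some a b h₁ =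
      Point.some x' y' h₂) :
    x' * (x - a) ^ 2 = a * x ^ 2 + a ^ 2 * x + 2 * n - 2 * (b * y) := by
  have hP := equation_of_nonsingular h
  have hQ := equation_of_nonsingular h₁
  by_cases hx : x = a
  · subst hx
    rcases sq_eq_sq_iff_eq_or_eq_neg.1 (hP.trans hQ.symm) with rfl | hy
    · linear_combination 2 * hP
    · rw [some_add_some_neg h h₁ hy] at hadd
      exact absurd hadd.symm (Point.some_ne_zero _)
  · obtain ⟨y₃, h₃, hsum⟩ := add_some_of_X_ne h h₁ hx
    rw [hsum, Point.some.injEq] at hadd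
    have := sub_ne_zero.2 hx
    rw [← hadd.1]
    field_simp
    linear_combination hP + hQ

lemma doubleX_mul {x y : ℚ} (h : y ^ 2 = x ^ 3 + n) (hy : y ≠ 0) :
    ((3 * x ^ 2 / (2 * y)) ^ 2 - x - x) * (4 * (x ^ 3 + n)) = x ^ 4 - 8 * n * x := by
  have hn : (n : ℚ) = y ^ 2 - x ^ 3 := by linarith
  rw [hn]
  field_simp
  ring

lemma exists_add_sub_some {x₁ y₁ x₂ y₂ : ℚ} (h₁ : (MordellCurve n).toAffine.Nonsingular x₁ y₁)
    (h₂ : (MordellCurve n).toAffine.Nonsingular x₂ y₂) (hx : x₁ ≠ x₂) :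
    ∃ x₃ y₃ h₃ x₄ y₄ h₄, Point.some x₁ y₁ h₁ + Point.some x₂ y₂ h₂ = Point.some x₃ y₃ h₃ ∧
      Point.some x₁ y₁ h₁ - Point.some x₂ y₂ h₂ = Point.some x₄ y₄ h₄ ∧
      (x₃ + x₄) * (x₁ - x₂) ^ 2 = 2 * (x₁ * x₂) * (x₁ + x₂) + 4 * n ∧
      x₃ * x₄ * (x₁ - x₂) ^ 2 = (x₁ * x₂) ^ 2 - 4 * n * (x₁ + x₂) := by
  obtain ⟨h', hneg⟩ := neg_some h₂
  obtain ⟨y₃, h₃, hadd⟩ := add_some_of_X_ne h₁ h₂ hx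
  obtain ⟨y₄, h₄, hsub⟩ := add_some_of_X_ne h₁ h' hx
  rw [← hneg, ← sub_eq_add_neg] at hsub
  refine ⟨_, y₃, h₃, _, y₄, h₄, hadd, hsub, ?_⟩
  have hx₃ := addX_mul_sub_sq hadd
  have hx₄ := addX_mul_sub_sq ((congrArg _ hneg.symm).trans ((sub_eq_add_neg _ _).symm.trans hsub))
  refine ⟨by linear_combination hx₃ + hx₄, ?_⟩
  generalize ((y₁ - y₂) / (x₁ - x₂)) ^ 2 - x₁ - x₂ = x₃ at hx₃ ⊢
  generalize ((y₁ - -y₂) / (x₁ - x₂)) ^ 2 - x₁ - x₂ = x₄ at hx₄ ⊢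
  have hP₁ := equation_of_nonsingular h₁
  have hP₂ := equation_of_nonsingular h₂
  refine mul_left_cancel₀ (pow_ne_zero 2 (sub_ne_zero.2 hx)) ?_
  linear_combination (x₄ * (x₁ - x₂) ^ 2) * hx₃ +
    (x₂ * x₁ ^ 2 + x₂ ^ 2 * x₁ + 2 * n - 2 * (y₂ * y₁)) * hx₄ -
    4 * y₂ ^ 2 * hP₁ - 4 * (x₁ ^ 3 + n) * hP₂

end GroupLaw

section Height

/-- The height of a rational point on `y² = x³ + n`: that of its first coordinate, and `0` at
infinity. -/
noncomputable def height : (MordellCurve n).toAffine.Point → ℝ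
  | .zero => 0
  | .some x _ _ => mordellHeight (n : ℚ) x

/-- The error in the height inequalities, chosen large enough for all of them. -/
noncomputable def heightError : ℝ :=
  600 * (totalWeight ℚ * log 2)

lemma totalWeight_mul_log_two_nonneg : 0 ≤ totalWeight ℚ * log 2 :=
  mul_nonneg (Nat.cast_nonneg _) (log_nonneg one_le_two)

lemma heightError_nonneg : 0 ≤ heightError :=
  mul_nonneg (by simp) totalWeight_mul_log_two_nonneg

lemma height_zero : height (0 : (MordellCurve n).toAffine.Point) = 0 :=
  rfl

lemma height_some {x y : ℚ} (h : (MordellCurve n).toAffine.Nonsingular x y) :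
    height (Point.some x y h) = mordellHeight (n : ℚ) x :=
  rfl

lemma height_nonneg (P : (MordellCurve n).toAffine.Point) : 0 ≤ height P := by
  rcases P with _ | ⟨x, _, _⟩
  · exact le_rfl
  · exact mordellHeight_nonneg _ _

lemma height_neg (P : (MordellCurve n).toAffine.Point) : height (-P) = height P := by
  rcases P with _ | ⟨x, y, h⟩
  · rfl
  · obtain ⟨h', hneg⟩ := neg_some h
    rw [hneg, height_some, height_some]

lemma height_add_self_le (hn : n ≠ 0) (P : (MordellCurve n).toAffine.Point) :
    height (P + P) ≤ 4 * height P + heightError := by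
  have hE := heightError_nonneg
  rcases P with _ | ⟨x, y, h⟩
  · rw [← Point.zero_def, add_zero, height_zero]
    linarith
  by_cases hy : y = 0
  · rw [some_add_some_neg h h (by rw [hy, neg_zero]), height_zero]
    linarith [height_nonneg (Point.some x y h)]
  · obtain ⟨y', h', hdouble⟩ := add_self_some h hy
    have heq := equation_of_nonsingular h
    have hx : 4 * (x ^ 3 + (n : ℚ)) ≠ 0 := heq ▸ mul_ne_zero four_ne_zero (pow_ne_zero 2 hy)
    rw [hdouble, height_some, height_some, heightError]
    linarith [mordellHeight_double_le (Int.cast_ne_zero.2 hn) hx (doubleX_mul heq hy),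
      totalWeight_mul_log_two_nonneg]

lemma four_mul_height_le (hn : n ≠ 0) (P : (MordellCurve n).toAffine.Point) :
    4 * height P ≤ height (P + P) + heightError := by
  have hE := heightError_nonneg
  rcases P with _ | ⟨x, y, h⟩
  · rw [← Point.zero_def, add_zero, height_zero]
    linarith
  have heq := equation_of_nonsingular h
  by_cases hy : y = 0
  · have hx : x ^ 3 + (n : ℚ) = 0 := by rw [← heq, hy, zero_pow two_ne_zero]
    rw [height_some, mordellHeight_eq_zero_of_pow_three_eq_neg (Int.cast_ne_zero.2 hn) hx]
    linarith [height_nonneg (Point.some x y h + Point.some x y h)]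
  · obtain ⟨y', h', hdouble⟩ := add_self_some h hy
    have hx : 4 * (x ^ 3 + (n : ℚ)) ≠ 0 := heq ▸ mul_ne_zero four_ne_zero (pow_ne_zero 2 hy)
    rw [hdouble, height_some, height_some, heightError]
    linarith [four_mul_mordellHeight_le (Int.cast_ne_zero.2 hn) hx (doubleX_mul heq hy)
      (by norm_num), totalWeight_mul_log_two_nonneg]

lemma height_add_add_height_sub_le (hn : n ≠ 0) (P Q : (MordellCurve n).toAffine.Point) :
    height (P + Q) + height (P - Q) ≤ 2 * (height P + height Q) + heightError := by
  have hE := heightError_nonneg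
  rcases P with _ | ⟨x₁, y₁, h₁⟩
  · rw [← Point.zero_def, zero_add, zero_sub, height_neg, height_zero]
    linarith
  rcases Q with _ | ⟨x₂, y₂, h₂⟩
  · rw [← Point.zero_def, add_zero, sub_zero, height_zero]
    linarith
  by_cases hx : x₁ = x₂
  · subst hx
    have hself := height_add_self_le hn (Point.some x₁ y₂ h₂)
    rcases eq_or_eq_neg_of_X_eq h₁ h₂ with hPQ | hPQ <;> rw [hPQ]
    · rw [sub_self, height_zero]
      linarith
    · rw [neg_add_cancel, ← neg_add', height_neg, height_neg, height_zero]
      linarith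
  · obtain ⟨x₃, y₃, h₃, x₄, y₄, h₄, hadd, hsub, hsum, hprod⟩ := exists_add_sub_some h₁ h₂ hx
    rw [hadd, hsub, height_some, height_some, height_some, height_some, heightError]
    linarith [mordellHeight_addSub_le (Int.cast_ne_zero.2 hn) hx hsum hprod,
      totalWeight_mul_log_two_nonneg]

-- The lower bound is the upper bound for `P + Q` and `P - Q`, combined with duplication.
theorem abs_height_parallelogram_le (hn : n ≠ 0) (P Q : (MordellCurve n).toAffine.Point) :
    |height (P + Q) + height (P - Q) - 2 * (height P + height Q)| ≤ 2 * heightError := by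
  have hupper := height_add_add_height_sub_le hn P Q
  have hlower := height_add_add_height_sub_le hn (P + Q) (P - Q)
  rw [show P + Q + (P - Q) = P + P by abel, show P + Q - (P - Q) = Q + Q by abel] at hlower
  have hP := four_mul_height_le hn P
  have hQ := four_mul_height_le hn Q
  rw [abs_le]
  constructor <;> linarith

end Height

section Northcott

lemma finite_setOf_mordellHeight_le {n : ℚ} (hn : n ≠ 0) (B : ℝ) :
    {x : ℚ | mordellHeight n x ≤ B}.Finite := by
  refine Set.Finite.of_injOn (f := fun x ↦ x ^ 3 / n) (t := {u : ℚ | logHeight₁ u ≤ B})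
    (fun _ hx ↦ hx) (fun x _ x' _ h ↦ ?_) (Northcott.finite_le B)
  exact (Odd.strictMono_pow (by decide : Odd 3)).injective ((div_left_inj' hn).1 h)

lemma finite_setOf_X_eq (x : ℚ) :
    {P : (MordellCurve n).toAffine.Point | ∃ y h, P = Point.some x y h}.Finite := by
  rcases Set.eq_empty_or_nonempty
    {P : (MordellCurve n).toAffine.Point | ∃ y h, P = Point.some x y h} with hempty | ⟨P, y, h, rfl⟩
  · exact hempty ▸ Set.finite_empty
  · refine (Set.toFinite {Point.some x y h, -Point.some x y h}).subset ?_
    rintro _ ⟨y', h', rfl⟩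
    exact eq_or_eq_neg_of_X_eq h' h

theorem northcott_height (hn : n ≠ 0) :
    Northcott (height : (MordellCurve n).toAffine.Point → ℝ) := by
  refine ⟨fun B ↦ ((Set.finite_singleton 0).union
    ((finite_setOf_mordellHeight_le (Int.cast_ne_zero.2 hn) B).biUnion
      fun x _ ↦ finite_setOf_X_eq x)).subset ?_⟩
  rintro (_ | ⟨x, y, h⟩) hP
  · exact .inl rfl
  · exact .inr (Set.mem_biUnion (x := x) hP ⟨y, h, rfl⟩)

end Northcott

section SmallRelation

/-- The affine points `P₀, P₁, P₂` have first or second coordinates in a small relation. -/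
def PointRelation (N : ℕ) (P₀ P₁ P₂ : (MordellCurve n).toAffine.Point) : Prop :=
  ∃ (x₀ y₀ x₁ y₁ x₂ y₂ : ℚ) (h₀ : _) (h₁ : _) (h₂ : _),
    P₀ = Point.some x₀ y₀ h₀ ∧ P₁ = Point.some x₁ y₁ h₁ ∧ P₂ = Point.some x₂ y₂ h₂ ∧
    (HasSmallRelation N x₀ x₁ x₂ ∨ HasSmallRelation N y₀ y₁ y₂)

/-- The error in the height inequalities for points in a relation with coefficients at most `N`. -/
noncomputable def relationError (N : ℕ) : ℝ :=
  (3 * N + 22 : ℕ) * (totalWeight ℚ * log 2)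

variable {P₀ P₁ P₂ : (MordellCurve n).toAffine.Point} {N : ℕ}

lemma height_le_of_pointRelation (hn : n ≠ 0) (h : PointRelation N P₀ P₁ P₂) :
    height P₀ ≤ height P₁ + height P₂ + relationError N := by
  obtain ⟨x₀, y₀, x₁, y₁, x₂, y₂, h₀, h₁, h₂, rfl, rfl, rfl, hrel⟩ := h
  rw [height_some, height_some, height_some, relationError]
  have hle := mordellHeight_le_of_hasSmallRelation (equation_of_nonsingular h₀)
    (equation_of_nonsingular h₁) (equation_of_nonsingular h₂) hrel (Int.cast_ne_zero.2 hn)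
  push_cast at hle ⊢
  linarith [totalWeight_mul_log_two_nonneg]

lemma exists_some_of_ne {P Q : (MordellCurve n).toAffine.Point} (h : P ≠ Q) :
    ∃ a b hab, P - Q = Point.some a b hab := by
  rcases hPQ : P - Q with _ | ⟨a, b, hab⟩
  · exact absurd hPQ (sub_ne_zero.2 h)
  · exact ⟨a, b, hab, rfl⟩

theorem height_le_of_pointRelation_sub (hn : n ≠ 0) (h : PointRelation N P₀ P₁ P₂)
    (h₁ : P₁ ≠ P₀) (h₂ : P₂ ≠ P₀) :
    height P₀ ≤ height (P₁ - P₀) + height (P₂ - P₀) + relationError N := by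
  obtain ⟨a₁, b₁, hab₁, hsub₁⟩ := exists_some_of_ne h₁
  obtain ⟨a₂, b₂, hab₂, hsub₂⟩ := exists_some_of_ne h₂
  have hadd₁ := (add_sub_cancel P₀ P₁).symm
  have hadd₂ := (add_sub_cancel P₀ P₂).symm
  rw [hsub₁] at hadd₁ ⊢
  rw [hsub₂] at hadd₂ ⊢
  obtain ⟨x₀, y₀, x₁, y₁, x₂, y₂, hP₀, hP₁, hP₂, rfl, rfl, rfl, hrel⟩ := h
  exact mordellHeight_le_of_hasSmallRelation_add (equation_of_nonsingular hP₀)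
    (equation_of_nonsingular hP₁) (equation_of_nonsingular hP₂) hrel (Int.cast_ne_zero.2 hn)
    (equation_of_nonsingular hab₁) (equation_of_nonsingular hab₂) (addX_mul_sub_sq hadd₁.symm)
    (addX_mul_sub_sq hadd₂.symm)

end SmallRelation

end MordellCurve

/-! ### Canonical heights and packing -/

section ParallelogramLaw

open Filter Topology

variable {G : Type*} [AddCommGroup G]

/-- The parallelogram law for a real function on an abelian group. Together with non-negativity it
characterises positive semidefinite quadratic forms, such as canonical heights. -/
def ParallelogramLaw (q : G → ℝ) : Prop :=
  ∀ x y, q (x + y) + q (x - y) = 2 * (q x + q y)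

/-- The `k`-th approximation `4⁻ᵏ h(2ᵏ x)` to the canonical height attached to `h`. -/
noncomputable def tateSeq (h : G → ℝ) (x : G) (k : ℕ) : ℝ :=
  h ((2 ^ k : ℕ) • x) / 4 ^ k

lemma dist_tateSeq_succ_le {h : G → ℝ} {C : ℝ} (hC : ∀ x, |h (x + x) - 4 * h x| ≤ C) (x : G)
    (k : ℕ) : dist (tateSeq h x k) (tateSeq h x (k + 1)) ≤ C / 2 / 2 ^ k := by
  set z := (2 ^ k : ℕ) • x with hz
  have hC₀ : 0 ≤ C := (abs_nonneg _).trans (hC 0)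
  have hsucc : (2 ^ (k + 1) : ℕ) • x = z + z := by rw [hz, ← add_smul, pow_succ, mul_two]
  have hpow : (2 : ℝ) * 2 ^ k ≤ 4 ^ (k + 1) := by
    rw [← pow_succ']; gcongr; norm_num
  calc dist (tateSeq h x k) (tateSeq h x (k + 1)) = |(h (z + z) - 4 * h z) / 4 ^ (k + 1)| := by
        rw [dist_comm, Real.dist_eq, tateSeq, tateSeq, hsucc, ← hz]
        congr 1
        field_simp
        ring
    _ ≤ C / (2 * 2 ^ k) := by
        rw [abs_div, abs_of_pos (by positivity : (0 : ℝ) < 4 ^ (k + 1))]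
        gcongr
        exact hC z
    _ = C / 2 / 2 ^ k := by rw [div_div]

lemma tendsto_tateSeq_parallelogram {h : G → ℝ} {C : ℝ}
    (hC : ∀ x y, |h (x + y) + h (x - y) - 2 * (h x + h y)| ≤ C) (x y : G) :
    Tendsto (fun k ↦ tateSeq h (x + y) k + tateSeq h (x - y) k
      - 2 * (tateSeq h x k + tateSeq h y k)) atTop (𝓝 0) := by
  have hgeom : Tendsto (fun k : ℕ ↦ C / 4 ^ k) atTop (𝓝 0) := by
    simpa [div_eq_mul_inv] using (tendsto_pow_atTop_nhds_zero_of_lt_one (r := (1 / 4 : ℝ))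
      (by norm_num) (by norm_num)).const_mul C
  refine squeeze_zero_norm (fun k ↦ ?_) hgeom
  have hk := hC ((2 ^ k : ℕ) • x) ((2 ^ k : ℕ) • y)
  rw [← smul_add, ← smul_sub] at hk
  simp only [tateSeq]
  rw [← add_div, ← add_div, mul_div_assoc', ← sub_div, Real.norm_eq_abs, abs_div,
    abs_of_pos (by positivity : (0 : ℝ) < 4 ^ k)]
  gcongr

/-- Tate's construction of the canonical height. -/
theorem exists_parallelogramLaw_abs_sub_le {h : G → ℝ} {C : ℝ}
    (hC : ∀ x y, |h (x + y) + h (x - y) - 2 * (h x + h y)| ≤ C) (h_zero : h 0 = 0)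
    (h_nonneg : ∀ x, 0 ≤ h x) :
    ∃ q : G → ℝ, ParallelogramLaw q ∧ (∀ x, 0 ≤ q x) ∧ ∀ x, |q x - h x| ≤ C := by
  have hdouble (x : G) : |h (x + x) - 4 * h x| ≤ C := by
    have := hC x x
    rw [sub_self, h_zero] at this
    convert this using 2
    ring
  have hlim (x : G) : ∃ l, Tendsto (tateSeq h x) atTop (𝓝 l) :=
    cauchySeq_tendsto_of_complete (cauchySeq_of_le_geometric_two (dist_tateSeq_succ_le hdouble x))
  choose q hq using hlim
  refine ⟨q, fun x y ↦ ?_, fun x ↦ ?_, fun x ↦ ?_⟩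
  · have hlimit := ((hq (x + y)).add (hq (x - y))).sub (((hq x).add (hq y)).const_mul 2)
    linarith [tendsto_nhds_unique hlimit (tendsto_tateSeq_parallelogram hC x y)]
  · exact ge_of_tendsto' (hq x) fun k ↦ div_nonneg (h_nonneg _) (by positivity)
  · have := dist_le_of_le_geometric_two_of_tendsto₀ (dist_tateSeq_succ_le hdouble x) (hq x)
    rwa [tateSeq, pow_zero, pow_zero, one_smul, div_one, dist_comm, Real.dist_eq] at this

namespace ParallelogramLaw

variable {q : G → ℝ} (hq : ParallelogramLaw q)
include hq

lemma map_zero : q 0 = 0 := by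
  have := hq 0 0
  simp only [add_zero, sub_zero] at this
  linarith

lemma map_neg (x : G) : q (-x) = q x := by
  have := hq 0 x
  rw [zero_add, zero_sub, hq.map_zero] at this
  linarith

lemma polarization_add_left (x y z : G) :
    q (x + y + z) - q (x + y - z) = (q (x + z) - q (x - z)) + (q (y + z) - q (y - z)) := by
  have h₁ := hq (x + z) y
  have h₂ := hq (x - z) y
  have h₃ := hq x (y + z)
  have h₄ := hq x (y - z)
  rw [add_right_comm] at h₁
  rw [sub_add_eq_add_sub] at h₂
  rw [← add_assoc, add_comm y z, ← sub_sub] at h₃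
  rw [← add_sub_assoc, ← sub_add, sub_add_eq_add_sub] at h₄
  rw [add_comm y z]
  linarith

/-- The Jordan–von Neumann theorem. -/
lemma exists_bilin :
    ∃ B : G →ₗ[ℤ] G →ₗ[ℤ] ℝ, (∀ x, B x x = q x) ∧ ∀ x y, B x y = B y x := by
  let b (x y : G) : ℝ := (q (x + y) - q (x - y)) / 4
  have b_comm (x y : G) : b x y = b y x := by
    simp only [b]
    rw [add_comm x y, ← neg_sub y x, hq.map_neg]
  have b_add_left (x y z : G) : b (x + y) z = b x z + b y z := by
    simp only [b]
    rw [hq.polarization_add_left, add_div]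
  let b_right (x : G) : G →ₗ[ℤ] ℝ :=
    (AddMonoidHom.mk' (b x) fun y z ↦ by
      rw [b_comm, b_add_left, b_comm y, b_comm z]).toIntLinearMap
  let B : G →+ G →ₗ[ℤ] ℝ := AddMonoidHom.mk' b_right fun x y ↦ LinearMap.ext (b_add_left x y)
  refine ⟨B.toIntLinearMap, fun x ↦ ?_, b_comm⟩
  change (q (x + x) - q (x - x)) / 4 = q x
  have := hq x x
  rw [sub_self, hq.map_zero] at *
  linarith

end ParallelogramLaw

lemma exists_rat_bilin_extension (B : G →ₗ[ℤ] G →ₗ[ℤ] ℝ) :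
    ∃ B' : (ℚ ⊗[ℤ] G) →ₗ[ℚ] (ℚ ⊗[ℤ] G) →ₗ[ℚ] ℝ, ∀ g g', B' (1 ⊗ₜ g) (1 ⊗ₜ g') = B g g' :=
  ⟨LinearMap.liftBaseChange ℚ
    (((LinearMap.liftBaseChangeEquiv ℚ).toLinearMap.restrictScalars ℤ) ∘ₗ B), by simp⟩

lemma exists_smul_eq_one_tmul (v : ℚ ⊗[ℤ] G) :
    ∃ (m : ℤ) (g : G), m ≠ 0 ∧ m • v = (1 : ℚ) ⊗ₜ[ℤ] g := by
  have : IsLocalizedModule (nonZeroDivisors ℤ) (TensorProduct.mk ℤ ℚ G 1) :=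
    (isLocalizedModule_iff_isBaseChange (nonZeroDivisors ℤ) ℚ _).2
      (TensorProduct.isBaseChange ℤ G ℚ)
  obtain ⟨⟨g, m⟩, hgm⟩ := IsLocalizedModule.surj (nonZeroDivisors ℤ) (TensorProduct.mk ℤ ℚ G 1) v
  exact ⟨m, g, nonZeroDivisors.ne_zero m.2, hgm⟩

end ParallelogramLaw

section EuclideanEmbedding

variable {V : Type*} [AddCommGroup V] [Module ℚ V] {ι : Type*}

lemma bilin_sum_smul_sum_smul [Fintype ι] (b : ι → V) (B : V →ₗ[ℚ] V →ₗ[ℚ] ℝ) (c d : ι → ℚ) :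
    B (∑ i, c i • b i) (∑ j, d j • b j) =
      (fun i ↦ (c i : ℝ)) ⬝ᵥ (Matrix.of fun i j ↦ B (b i) (b j)).mulVec (fun j ↦ (d j : ℝ)) := by
  simp only [map_sum, LinearMap.sum_apply, map_smul, LinearMap.smul_apply, Rat.smul_def,
    dotProduct, Matrix.mulVec, Matrix.of_apply, Finset.mul_sum]
  rw [Finset.sum_comm]
  exact Finset.sum_congr rfl fun i _ ↦ Finset.sum_congr rfl fun j _ ↦ by ring

lemma posSemidef_of_bilin [Finite ι] (b : ι → V) {B : V →ₗ[ℚ] V →ₗ[ℚ] ℝ}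
    (B_symm : ∀ v w, B v w = B w v) (B_nonneg : ∀ v, 0 ≤ B v v) :
    (Matrix.of fun i j ↦ B (b i) (b j)).PosSemidef := by
  have := Fintype.ofFinite ι
  refine Matrix.PosSemidef.of_dotProduct_mulVec_nonneg
    (Matrix.ext fun i j ↦ B_symm (b j) (b i)) fun x ↦ ?_
  have hdense : DenseRange (Pi.map fun (_ : ι) (c : ℚ) ↦ (c : ℝ)) :=
    DenseRange.piMap fun _ ↦ Rat.denseRange_cast
  refine hdense.induction_on
    (p := fun x ↦ 0 ≤ star x ⬝ᵥ (Matrix.of fun i j ↦ B (b i) (b j)).mulVec x)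
    x (isClosed_le continuous_const ?_) fun c ↦ ?_
  · simp only [star_trivial]
    fun_prop
  · have := B_nonneg (∑ i, c i • b i)
    rwa [bilin_sum_smul_sum_smul] at this

open scoped MatrixOrder Matrix.Norms.L2Operator in
lemma exists_dotProduct_mulVec_eq_norm_sq [Fintype ι] {A : Matrix ι ι ℝ} (hA : A.PosSemidef) :
    ∃ T : (ι → ℝ) →ₗ[ℝ] EuclideanSpace ℝ ι, ∀ x, x ⬝ᵥ A.mulVec x = ‖T x‖ ^ 2 := by
  classical
  obtain ⟨C, hC⟩ := CStarAlgebra.nonneg_iff_eq_star_mul_self.1 hA.nonneg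
  refine ⟨(WithLp.linearEquiv 2 ℝ (ι → ℝ)).symm.toLinearMap ∘ₗ C.mulVecLin, fun x ↦ ?_⟩
  rw [hC, Matrix.star_eq_conjTranspose, Matrix.conjTranspose_eq_transpose_of_trivial,
    ← Matrix.mulVec_mulVec, Matrix.dotProduct_mulVec, Matrix.vecMul_transpose,
    EuclideanSpace.real_norm_sq_eq]
  simp [dotProduct, pow_two]

lemma exists_bilin_self_eq_norm_sq [FiniteDimensional ℚ V] {B : V →ₗ[ℚ] V →ₗ[ℚ] ℝ}
    (B_symm : ∀ v w, B v w = B w v) (B_nonneg : ∀ v, 0 ≤ B v v) :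
    ∃ T : V →+ EuclideanSpace ℝ (Fin (Module.finrank ℚ V)), ∀ v, B v v = ‖T v‖ ^ 2 := by
  let b := Module.finBasis ℚ V
  obtain ⟨T, hT⟩ := exists_dotProduct_mulVec_eq_norm_sq (posSemidef_of_bilin b B_symm B_nonneg)
  let coords : V →+ (Fin (Module.finrank ℚ V) → ℝ) :=
    AddMonoidHom.mk' (fun v i ↦ (b.repr v i : ℝ)) fun v w ↦ by ext i; simp
  refine ⟨T.toAddMonoidHom.comp coords, fun v ↦ ?_⟩
  calc B v v = B (∑ i, b.repr v i • b i) (∑ i, b.repr v i • b i) := by rw [b.sum_repr]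
    _ = ‖T (coords v)‖ ^ 2 := by rw [bilin_sum_smul_sum_smul, hT]; rfl

theorem ParallelogramLaw.exists_addMonoidHom_euclideanSpace {G : Type*} [AddCommGroup G]
    [FiniteDimensional ℚ (ℚ ⊗[ℤ] G)] {q : G → ℝ} (hq : ParallelogramLaw q)
    (q_nonneg : ∀ x, 0 ≤ q x) :
    ∃ t : G →+ EuclideanSpace ℝ (Fin (grpRank G)), ∀ x, q x = ‖t x‖ ^ 2 := by
  obtain ⟨B, B_self, B_comm⟩ := hq.exists_bilin
  obtain ⟨B', hB'⟩ := exists_rat_bilin_extension B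
  have B'_flip : B' = B'.flip := by
    ext g g'
    simp [hB', B_comm g]
  have B'_nonneg (v) : 0 ≤ B' v v := by
    obtain ⟨m, g, hm, hg⟩ := exists_smul_eq_one_tmul v
    have hqg : q g = m ^ 2 * B' v v := by
      rw [← B_self, ← hB', ← hg, map_zsmul, map_zsmul, LinearMap.smul_apply, smul_smul,
        zsmul_eq_mul]
      push_cast
      ring
    exact nonneg_of_mul_nonneg_right (hqg ▸ q_nonneg g) (by positivity)
  obtain ⟨T, hT⟩ := exists_bilin_self_eq_norm_sq (fun v w ↦ LinearMap.congr_fun₂ B'_flip v w)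
    B'_nonneg
  refine ⟨T.comp (TensorProduct.mk ℤ ℚ G 1).toAddMonoidHom, fun x ↦ ?_⟩
  rw [← B_self, ← hB', hT]
  rfl

end EuclideanEmbedding

section Packing

lemma exists_three_norm_sub_le_of_norm_le_one (E : Type*) [NormedAddCommGroup E] [NormedSpace ℝ E]
    [ProperSpace E] {ε : ℝ} (hε : 0 < ε) :
    ∃ N : ℕ, ∀ M, N ≤ M → ∀ P : Fin M → E, (∀ i, ‖P i‖ ≤ 1) →
      ∃ i j k, i ≠ j ∧ i ≠ k ∧ j ≠ k ∧
        ‖P i - P j‖ ≤ ε ∧ ‖P i - P k‖ ≤ ε ∧ ‖P j - P k‖ ≤ ε := by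
  classical
  obtain ⟨c, -, c_finite, hc⟩ := (isCompact_closedBall (0 : E) 1).finite_cover_balls (half_pos hε)
  have := c_finite.fintype
  refine ⟨2 * Fintype.card c + 1, fun M hM P hP ↦ ?_⟩
  have hcenter (i) : ∃ z : c, ‖P i - z‖ < ε / 2 := by
    simpa [dist_eq_norm] using hc (mem_closedBall_zero_iff.2 (hP i))
  choose f hf using hcenter
  have hclose {a b : Fin M} (hab : f a = f b) : ‖P a - P b‖ ≤ ε :=
    calc ‖P a - P b‖ ≤ ‖P a - f a‖ + ‖P b - f a‖ := by
          rw [← sub_sub_sub_cancel_right _ _ (f a : E)]; exact norm_sub_le _ _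
      _ ≤ ε := by linarith [hf a, hab ▸ hf b]
  obtain ⟨z, hz⟩ := Fintype.exists_lt_card_fiber_of_mul_lt_card f (n := 2) (by
    rw [Fintype.card_fin]; omega)
  obtain ⟨i, j, k, hi, hj, hk, hij, hik, hjk⟩ := Finset.two_lt_card_iff.1 hz
  simp only [Finset.mem_filter, Finset.mem_univ, true_and] at hi hj hk
  exact ⟨i, j, k, hij, hik, hjk, hclose (hi.trans hj.symm), hclose (hi.trans hk.symm),
    hclose (hj.trans hk.symm)⟩

lemma exists_three_norm_sub_le (E : Type*) [NormedAddCommGroup E] [NormedSpace ℝ E]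
    [ProperSpace E] {ε : ℝ} (hε : 0 < ε) :
    ∃ N : ℕ, ∀ M, N ≤ M → ∀ (P : Fin M → E) (ρ : ℝ), (∀ i, ‖P i‖ ≤ ρ) →
      ∃ i j k, i ≠ j ∧ i ≠ k ∧ j ≠ k ∧
        ‖P i - P j‖ ≤ ε * ρ ∧ ‖P i - P k‖ ≤ ε * ρ ∧ ‖P j - P k‖ ≤ ε * ρ := by
  obtain ⟨N, hN⟩ := exists_three_norm_sub_le_of_norm_le_one E hε
  refine ⟨N, fun M hM P ρ hP ↦ ?_⟩
  obtain ⟨i, j, k, hij, hik, hjk, h₁, h₂, h₃⟩ := hN M hM (fun i ↦ ρ⁻¹ • P i) fun i ↦ by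
    have hρ : 0 ≤ ρ := (norm_nonneg _).trans (hP i)
    rw [norm_smul, norm_inv, Real.norm_of_nonneg hρ]
    exact inv_mul_le_one_of_le₀ (hP i) hρ
  refine ⟨i, j, k, hij, hik, hjk, ?_⟩
  have hρ : 0 ≤ ρ := (norm_nonneg _).trans (hP i)
  have rescale {a b : Fin M} (h : ‖ρ⁻¹ • P a - ρ⁻¹ • P b‖ ≤ ε) : ‖P a - P b‖ ≤ ε * ρ := by
    rcases hρ.eq_or_lt with rfl | hρ
    · simp [norm_le_zero_iff.1 (hP a), norm_le_zero_iff.1 (hP b)]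
    · rwa [← smul_sub, norm_smul, norm_inv, Real.norm_of_nonneg hρ.le, inv_mul_eq_div,
        div_le_iff₀ hρ] at h
  exact ⟨rescale h₁, rescale h₂, rescale h₃⟩

theorem ParallelogramLaw.exists_three_map_sub_le (r : ℕ) :
    ∃ N : ℕ, ∀ M, N ≤ M → ∀ (G : Type*) [AddCommGroup G] [FiniteDimensional ℚ (ℚ ⊗[ℤ] G)],
      grpRank G = r → ∀ q : G → ℝ, ParallelogramLaw q → (∀ x, 0 ≤ q x) →
      ∀ (P : Fin M → G) (H : ℝ), (∀ i, q (P i) ≤ H) →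
        ∃ i j k, i ≠ j ∧ i ≠ k ∧ j ≠ k ∧
          q (P i - P j) ≤ H / 16 ∧ q (P i - P k) ≤ H / 16 ∧ q (P j - P k) ≤ H / 16 := by
  obtain ⟨N, hN⟩ := exists_three_norm_sub_le (EuclideanSpace ℝ (Fin r))
    (ε := 1 / 4) (by norm_num)
  refine ⟨N, fun M hM G _ _ hr q hq q_nonneg P H hP ↦ ?_⟩
  subst hr
  obtain ⟨t, ht⟩ := hq.exists_addMonoidHom_euclideanSpace q_nonneg
  obtain ⟨i, j, k, hij, hik, hjk, h₁, h₂, h₃⟩ := hN M hM (fun i ↦ t (P i)) √H fun i ↦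
    Real.le_sqrt_of_sq_le ((ht _).symm.trans_le (hP i))
  have hH : 0 ≤ H := (q_nonneg _).trans (hP i)
  have of_norm {a b : Fin M} (h : ‖t (P a) - t (P b)‖ ≤ 1 / 4 * √H) :
      q (P a - P b) ≤ H / 16 :=
    calc q (P a - P b) = ‖t (P a) - t (P b)‖ ^ 2 := by rw [ht, map_sub]
      _ ≤ (1 / 4 * √H) ^ 2 := by gcongr
      _ = H / 16 := by rw [mul_pow, Real.sq_sqrt hH]; ring
  exact ⟨i, j, k, hij, hik, hjk, of_norm h₁, of_norm h₂, of_norm h₃⟩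

end Packing

namespace MordellCurve

/-- A height bound for large configurations of points any three of which satisfy a relation with
coefficients at most `N`. It does not depend on the curve. -/
noncomputable def configurationBound (N : ℕ) : ℝ :=
  12 * heightError + 4 * relationError N

theorem exists_height_le_configurationBound (r : ℕ) :
    ∃ N : ℕ, ∀ M, N ≤ M → ∀ n : ℤ, n ≠ 0 →
      FiniteDimensional ℚ (ℚ ⊗[ℤ] (MordellCurve n).toAffine.Point) →
      grpRank (MordellCurve n).toAffine.Point = r →
      ∀ P : Fin M → (MordellCurve n).toAffine.Point, Function.Injective P →
        (∀ i j k, i ≠ j → i ≠ k → j ≠ k → PointRelation M (P i) (P j) (P k)) →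
        ∀ i, height (P i) ≤ configurationBound M := by
  obtain ⟨N, hN⟩ := ParallelogramLaw.exists_three_map_sub_le r
  refine ⟨N, fun M hM n hn _ hr P hP hrel l ↦ ?_⟩
  obtain ⟨q, hq, q_nonneg, hqh⟩ := exists_parallelogramLaw_abs_sub_le
    (abs_height_parallelogram_le hn) height_zero height_nonneg
  have q_le (x) : q x ≤ height x + 2 * heightError := by linarith [(abs_le.1 (hqh x)).2]
  have le_q (x) : height x ≤ q x + 2 * heightError := by linarith [(abs_le.1 (hqh x)).1]
  have : Nonempty (Fin M) := ⟨l⟩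
  obtain ⟨m, hm⟩ := Finite.exists_max fun i ↦ q (P i)
  obtain ⟨i, j, k, hij, hik, hjk, h₁, h₂, h₃⟩ := hN M hM _ hr q hq q_nonneg P (q (P m)) hm
  have height_i : height (P i) ≤ q (P m) / 8 + 4 * heightError + relationError M := by
    have := height_le_of_pointRelation_sub hn (hrel i j k hij hik hjk) (hP.ne hij.symm)
      (hP.ne hik.symm)
    rw [← neg_sub, height_neg, ← neg_sub (P i), height_neg] at this
    linarith [le_q (P i - P j), le_q (P i - P k)]
  have height_k : height (P k) ≤ q (P m) / 8 + 4 * heightError + relationError M := by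
    have := height_le_of_pointRelation_sub hn (hrel k i j hik.symm hjk.symm hij) (hP.ne hik)
      (hP.ne hjk)
    linarith [le_q (P i - P k), le_q (P j - P k)]
  have height_le (l) : height (P l) ≤ q (P m) / 4 + 8 * heightError + 3 * relationError M := by
    have := q_nonneg (P m)
    have : 0 ≤ relationError M := by unfold relationError; positivity
    rcases eq_or_ne l i with rfl | hi
    · linarith [heightError_nonneg]
    rcases eq_or_ne l k with rfl | hk
    · linarith [heightError_nonneg]
    linarith [height_le_of_pointRelation hn (hrel l i k hi hk hik)]
  rw [configurationBound]
  linarith [height_le m, q_le (P m), height_le l, heightError_nonneg]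

end MordellCurve

/-! ### Perfect powers among the values of a polynomial -/

section PerfectPowers

open Polynomial

lemma exists_eq_pow_of_cast_eq_pow {m : ℕ} (hm : 0 < m) {z : ℤ} {r : ℚ} (h : (z : ℚ) = r ^ m) :
    ∃ w : ℤ, z = w ^ m := by
  have hr : IsIntegral ℤ (r ^ m) := h ▸ isIntegral_algebraMap
  obtain ⟨w, rfl⟩ := IsIntegrallyClosed.exists_algebraMap_eq_of_isIntegral_pow hm hr
  exact ⟨w, Int.cast_injective (α := ℚ) (by simpa using h)⟩

lemma exists_mem_eval_notMem {R : Type*} [CommRing R] [IsDomain R] {f : R[X]}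
    (hf : 0 < f.natDegree) {S T : Set R} (hS : S.Infinite) (hT : T.Finite) :
    ∃ x ∈ S, f.eval x ∉ T := by
  have hfiber (c : R) : {x | f.eval x = c}.Finite := by
    by_contra hinf
    have : f = C c := eq_of_infinite_eval_eq f (C c) (by simpa using hinf)
    simp [this] at hf
  by_contra! h
  exact hS ((hT.preimage' (f := fun x ↦ f.eval x) fun c _ ↦ hfiber c).subset h)

/-- If all values of `f` at positive integers are `m`-th powers, then a prime `p` dividing `f(k)`
satisfies `p² ∣ f(k)` and `p² ∣ f(k + p) ≡ f(k) + p f'(k)`, hence divides the discriminant. -/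
lemma dvd_of_forall_eval_eq_pow {f u v : ℤ[X]} {d : ℤ} (huv : u * f + v * derivative f = C d)
    {m : ℕ} (hm : 2 ≤ m) (hpow : ∀ k : ℕ, 0 < k → ∃ w, f.eval (k : ℤ) = w ^ m)
    {p : ℕ} (hp : p.Prime) {k : ℕ} (hk : 0 < k) (hpk : (p : ℤ) ∣ f.eval (k : ℤ)) : (p : ℤ) ∣ d := by
  have sq_dvd {k : ℕ} (hk : 0 < k) (hpk : (p : ℤ) ∣ f.eval (k : ℤ)) :
      (p : ℤ) ^ 2 ∣ f.eval (k : ℤ) := by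
    obtain ⟨w, hw⟩ := hpow k hk
    rw [hw] at hpk ⊢
    have := (Nat.prime_iff_prime_int.1 hp).dvd_of_dvd_pow hpk
    exact (pow_dvd_pow_of_dvd this 2).trans (pow_dvd_pow w hm)
  obtain ⟨z, hz⟩ := f.binomExpansion (k : ℤ) p
  have hpk' : (p : ℤ) ∣ f.eval ((k + p : ℕ) : ℤ) := by
    push_cast
    rw [hz]
    exact (hpk.add (dvd_mul_left _ _)).add ((dvd_pow_self _ two_ne_zero).mul_left z)
  have hderiv : (p : ℤ) ∣ (derivative f).eval (k : ℤ) := by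
    have h := sq_dvd (by omega) hpk'
    push_cast at h
    rw [hz, dvd_add_left (dvd_mul_left _ _), dvd_add_right (sq_dvd hk hpk), sq] at h
    exact Int.dvd_of_mul_dvd_mul_right (by exact_mod_cast hp.ne_zero) h
  have := congrArg (eval (k : ℤ)) huv
  rw [eval_add, eval_mul, eval_mul, eval_C] at this
  exact this ▸ (hpk.mul_left _).add (hderiv.mul_left _)

lemma exists_eval_ne_pow_of_bezout {f u v : ℤ[X]} (hf : 0 < f.natDegree) {d : ℤ} (hd : d ≠ 0)
    (huv : u * f + v * derivative f = C d) {m : ℕ} (hm : 2 ≤ m) :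
    ∃ k : ℕ, 0 < k ∧ ∀ w, f.eval (k : ℤ) ≠ w ^ m := by
  by_contra! hpow
  have pos_infinite : (Set.range fun t : ℕ ↦ ((t + 1 : ℕ) : ℤ)).Infinite :=
    Set.infinite_range_of_injective (Nat.cast_injective.comp Nat.succ_injective)
  obtain ⟨_, ⟨t₀, rfl⟩, hc⟩ := exists_mem_eval_notMem hf pos_infinite (Set.finite_singleton 0)
  set k₀ := t₀ + 1
  set c := f.eval (k₀ : ℤ)
  have progression_infinite :
      (Set.range fun t : ℕ ↦ ((k₀ + c.natAbs * d.natAbs * t : ℕ) : ℤ)).Infinite := by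
    refine Set.infinite_range_of_injective (Nat.cast_injective.comp fun s t hst ↦ ?_)
    have : c.natAbs * d.natAbs ≠ 0 := by simp_all
    simpa [this] using hst
  obtain ⟨_, ⟨t, rfl⟩, hk⟩ := exists_mem_eval_notMem hf progression_infinite
    (Set.toFinite {c, -c})
  set k := k₀ + c.natAbs * d.natAbs * t
  change f.eval (k : ℤ) ∉ _ at hk
  obtain ⟨s, hs⟩ : c * d ∣ f.eval (k : ℤ) - c := by
    refine dvd_trans ?_ (sub_dvd_eval_sub (k : ℤ) k₀ f)
    rw [← Int.natAbs_dvd, Int.natAbs_mul]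
    exact ⟨t, by simp [k]⟩
  have hfk : f.eval (k : ℤ) = c * (1 + d * s) := by linear_combination hs
  have not_unit : (1 + d * s).natAbs ≠ 1 := fun h ↦ hk <| by
    rcases Int.natAbs_eq_iff.1 h with h | h <;> rw [hfk, h] <;> simp
  obtain ⟨p, hp, hps⟩ := Nat.exists_prime_and_dvd not_unit
  rw [← Int.natCast_dvd] at hps
  have hpd := dvd_of_forall_eval_eq_pow huv hm hpow hp (by positivity) (hfk ▸ hps.mul_left c)
  have hp_one : (p : ℤ) ∣ 1 := (dvd_add_left (hpd.mul_right s)).1 hps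
  exact hp.one_lt.ne' (by exact_mod_cast Int.eq_one_of_dvd_one (by positivity) hp_one)

lemma exists_smul_eq_map_intCast (g : ℚ[X]) :
    ∃ (b : ℤ) (f : ℤ[X]), b ≠ 0 ∧ f.map (Int.castRingHom ℚ) = C (b : ℚ) * g := by
  obtain ⟨b, hb, h⟩ := IsLocalization.integerNormalization_spec (nonZeroDivisors ℤ) g
  refine ⟨b, _, nonZeroDivisors.ne_zero hb, h.trans ?_⟩
  rw [← smul_eq_C_mul, ← Int.cast_smul_eq_zsmul ℚ]

lemma exists_bezout_of_separable_map {f : ℤ[X]} (hf : (f.map (Int.castRingHom ℚ)).Separable) :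
    ∃ (u v : ℤ[X]) (d : ℤ), d ≠ 0 ∧ u * f + v * derivative f = C d := by
  obtain ⟨a, b, hab⟩ := hf
  obtain ⟨s, u, hs, hu⟩ := exists_smul_eq_map_intCast a
  obtain ⟨t, v, ht, hv⟩ := exists_smul_eq_map_intCast b
  refine ⟨C t * u, C s * v, s * t, mul_ne_zero hs ht,
    map_injective _ (Int.castRingHom ℚ).injective_int ?_⟩
  rw [derivative_map] at hab
  simp only [Polynomial.map_add, Polynomial.map_mul, map_C, hu, hv, Int.coe_castRingHom, C_mul]
  linear_combination (C (s : ℚ) * C (t : ℚ)) * hab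

theorem exists_eval_ne_pow_of_separable {g : ℚ[X]} (hdeg : 0 < g.natDegree) (hg : g.Separable)
    {m : ℕ} (hm : 2 ≤ m) : ∃ k : ℕ, 0 < k ∧ ∀ r, g.eval (k : ℚ) ≠ r ^ m := by
  obtain ⟨b, f, hb, hf⟩ := exists_smul_eq_map_intCast g
  have hbm : ((b ^ m : ℤ) : ℚ) ≠ 0 := by exact_mod_cast pow_ne_zero m hb
  -- Multiplying by `b ^ m` clears denominators and preserves being an `m`-th power.
  set F := C (b ^ (m - 1)) * f
  have hF : F.map (Int.castRingHom ℚ) = C ((b ^ m : ℤ) : ℚ) * g := by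
    obtain ⟨l, rfl⟩ : ∃ l, m = l + 1 := ⟨m - 1, by omega⟩
    simp only [F, Polynomial.map_mul, hf, map_C, ← mul_assoc, ← C_mul, add_tsub_cancel_right]
    simp [pow_succ]
  have F_natDegree : 0 < F.natDegree := by
    rwa [← natDegree_map_eq_of_injective (Int.castRingHom ℚ).injective_int, hF,
      natDegree_C_mul hbm]
  have F_separable : (F.map (Int.castRingHom ℚ)).Separable := by
    rw [hF]
    exact Separable.unit_mul (isUnit_C.2 hbm.isUnit) hg
  obtain ⟨u, v, d, hd, huv⟩ := exists_bezout_of_separable_map F_separable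
  obtain ⟨k, hk, hpow⟩ := exists_eval_ne_pow_of_bezout F_natDegree hd huv hm
  refine ⟨k, hk, fun r hr ↦ ?_⟩
  obtain ⟨w, hw⟩ := exists_eq_pow_of_cast_eq_pow (m := m) (z := F.eval (k : ℤ)) (r := b * r)
    (by omega) <| by
      have := eval_natCast_map (Int.castRingHom ℚ) F k
      rw [hF, eval_mul, eval_C, hr] at this
      rw [mul_pow]
      exact_mod_cast this.symm
  exact hpow w hw

theorem exists_length_le_of_separable {g : ℚ[X]} (hdeg : 0 < g.natDegree) (hg : g.Separable)
    {m : ℕ} (hm : 2 ≤ m) :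
    ∃ L : ℕ, ∀ c : ℚ, c ≠ 0 → ∀ N : ℕ,
      (∀ k ∈ Finset.Icc 1 N, ∃ r, c * g.eval (k : ℚ) = r ^ m) → N ≤ L := by
  have pos_infinite : (Set.range fun t : ℕ ↦ ((t + 1 : ℕ) : ℚ)).Infinite :=
    Set.infinite_range_of_injective (Nat.cast_injective.comp Nat.succ_injective)
  obtain ⟨_, ⟨t₀, rfl⟩, hk₀⟩ := exists_mem_eval_notMem hdeg pos_infinite (Set.finite_singleton 0)
  set k₀ := t₀ + 1
  obtain ⟨l, rfl⟩ : ∃ l, m = l + 1 := ⟨m - 1, by omega⟩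
  -- `c g(k₀) = r ^ m` eliminates `c`: then `g(k₀) ^ (m - 1) g(k) = (r ^ (m - 1) s / c) ^ m`.
  have he : g.eval (k₀ : ℚ) ^ l ≠ 0 := pow_ne_zero l hk₀
  obtain ⟨k, hk, hpow⟩ := exists_eval_ne_pow_of_separable (g := C (g.eval (k₀ : ℚ) ^ l) * g)
    (by rwa [natDegree_C_mul he]) (Separable.unit_mul (isUnit_C.2 he.isUnit) hg) hm
  refine ⟨k₀ + k, fun c hc N hN ↦ ?_⟩
  by_contra! hlt
  obtain ⟨r, hr⟩ := hN k₀ (Finset.mem_Icc.2 (by omega))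
  obtain ⟨s, hs⟩ := hN k (Finset.mem_Icc.2 (by omega))
  refine hpow (r ^ l * s / c) ?_
  rw [eval_mul, eval_C, div_pow, mul_pow, ← hs, ← pow_mul, mul_comm l, pow_mul, ← hr, mul_pow,
    eq_div_iff (pow_ne_zero _ hc)]
  ring

lemma separable_X_add_C_pow_sub_C {F : Type*} [Field F] (a : F) {b : F} (hb : b ≠ 0) {d : ℕ}
    (hd : (d : F) ≠ 0) : ((X + C a) ^ d - C b).Separable := by
  have hd₀ : d ≠ 0 := fun h ↦ hd (by simp [h])
  refine ⟨-C b⁻¹, C (b⁻¹ * (d : F)⁻¹) * (X + C a), ?_⟩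
  have hbC : C b⁻¹ * C b = 1 := by rw [← C_mul, inv_mul_cancel₀ hb, C_1]
  have hdC : C (d : F)⁻¹ * C (d : F) = 1 := by rw [← C_mul, inv_mul_cancel₀ hd, C_1]
  have hpow : (X + C a) * (X + C a) ^ (d - 1) = (X + C a) ^ d := mul_pow_sub_one hd₀ _
  rw [derivative_sub, derivative_C, sub_zero, derivative_X_add_C_pow, C_mul]
  linear_combination hbC + C b⁻¹ * (X + C a) ^ d * hdC + C b⁻¹ * C (d : F)⁻¹ * C (d : F) * hpow

end PerfectPowers

section NormalizedProgressions

open Polynomial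

lemma eq_of_add_pow_div_eq {d : ℕ} (hd : d ≠ 0) {α β α' β' : ℚ} (hβ' : β' ≠ 0)
    (h : ∀ k ∈ Finset.Icc 1 (d + 1), (α + k) ^ d / β = (α' + k) ^ d / β') :
    α = α' ∧ β = β' := by
  have hpoly : C β⁻¹ * (X + C α) ^ d = C β'⁻¹ * (X + C α') ^ d := by
    have hdeg (u v : ℚ) : (C u⁻¹ * (X + C v) ^ d).degree < ((d + 1 : ℕ) : WithBot ℕ) := by
      have : (C u⁻¹ * (X + C v) ^ d).natDegree ≤ d := by compute_degree
      exact (natDegree_le_iff_degree_le.1 this).trans_lt (by exact_mod_cast d.lt_succ_self)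
    refine eq_of_degrees_lt_of_eval_finset_eq
      ((Finset.Icc 1 (d + 1)).map Nat.castEmbedding) ?_ ?_ fun x hx ↦ ?_
    · simpa using hdeg β α
    · simpa using hdeg β' α'
    · obtain ⟨k, hk, rfl⟩ := Finset.mem_map.1 hx
      simpa [div_eq_inv_mul, add_comm] using h k hk
  have hα : α = α' := by
    have := congrArg (eval (-α)) hpoly
    simp only [eval_mul, eval_C, eval_pow, eval_add, eval_X, neg_add_cancel, zero_pow hd,
      mul_zero, zero_eq_mul, inv_eq_zero, hβ', pow_eq_zero_iff hd, false_or] at this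
    linarith
  subst hα
  refine ⟨rfl, inv_injective ?_⟩
  simpa using congrArg (eval (1 - α)) hpoly

lemma finite_setOf_add_pow_div_mem {d : ℕ} (hd : d ≠ 0) {T : Set ℚ} (hT : T.Finite) :
    {p : ℚ × ℚ | p.2 ≠ 0 ∧ ∀ k ∈ Finset.Icc 1 (d + 1), (p.1 + k) ^ d / p.2 ∈ T}.Finite := by
  let values (p : ℚ × ℚ) (k : Finset.Icc 1 (d + 1)) : ℚ := (p.1 + (k : ℕ)) ^ d / p.2
  refine Set.Finite.of_finite_image (f := values)
    ((Set.Finite.pi' fun _ ↦ hT).subset ?_) ?_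
  · rintro _ ⟨p, ⟨-, hp⟩, rfl⟩ k
    exact hp k k.2
  · rintro p - p' ⟨hp', -⟩ h
    have := eq_of_add_pow_div_eq hd hp' fun k hk ↦ congrFun h ⟨k, hk⟩
    exact Prod.ext this.1 this.2

theorem exists_length_le_of_div_mem_finite {d m : ℕ} (hd : d ≠ 0) (hm : 2 ≤ m) {T : Set ℚ}
    (hT : T.Finite) :
    ∃ L : ℕ, ∀ n a b : ℚ, n ≠ 0 → b ≠ 0 →
      (∀ k ∈ Finset.Icc 1 (d + 1), (a + k * b) ^ d / n ∈ T) →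
      ∀ N : ℕ, (∀ k ∈ Finset.Icc 1 N, ∃ r, (a + k * b) ^ d - n = r ^ m) → N ≤ L := by
  have bound (p : ℚ × ℚ) : ∃ L : ℕ, p.2 ≠ 0 → ∀ c : ℚ, c ≠ 0 → ∀ N : ℕ,
      (∀ k ∈ Finset.Icc 1 N, ∃ r, c * ((p.1 + k) ^ d - p.2) = r ^ m) → N ≤ L := by
    by_cases hp : p.2 = 0
    · exact ⟨0, fun h ↦ absurd hp h⟩
    have hdeg : 0 < ((X + C p.1) ^ d - C p.2).natDegree := by
      simpa [natDegree_sub_C, natDegree_pow] using Nat.pos_of_ne_zero hd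
    obtain ⟨L, hL⟩ := exists_length_le_of_separable hdeg
      (separable_X_add_C_pow_sub_C p.1 hp (Nat.cast_ne_zero.2 hd)) hm
    exact ⟨L, fun _ c hc N hN ↦ hL c hc N (by simpa [add_comm] using hN)⟩
  choose L hL using bound
  obtain ⟨M, hM⟩ := ((finite_setOf_add_pow_div_mem hd hT).image L).bddAbove
  refine ⟨M, fun n a b hn hb hmem N hN ↦ ?_⟩
  have scale (k : ℕ) : (a + k * b) ^ d = b ^ d * (a / b + k) ^ d := by
    rw [← mul_pow]; field_simp
  have hβ : n / b ^ d ≠ 0 := by positivity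
  calc N ≤ L (a / b, n / b ^ d) := hL _ hβ (b ^ d) (by positivity) N fun k hk ↦ by
        obtain ⟨r, hr⟩ := hN k hk
        refine ⟨r, ?_⟩
        rw [← hr, scale]
        field_simp
    _ ≤ M := hM ⟨_, ⟨hβ, fun k hk ↦ ?_⟩, rfl⟩
  convert hmem k hk using 1
  rw [scale]
  field_simp

end NormalizedProgressions

/-! ### The Mordell–Weil theorem for Mordell curves -/

open Polynomial

section SquareClasses

universe u

variable {K : Type u} [Field K]

/-- The elements of `T` represent only finitely many classes of `Kˣ` modulo squares: each of them
is, up to squares, one of finitely many nonzero representatives. -/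
def FiniteSquareClasses (T : Set K) : Prop :=
  ∃ S : Set K, S.Finite ∧ 0 ∉ S ∧ ∀ t ∈ T, ∃ s ∈ S, IsSquare (s * t)

namespace FiniteSquareClasses

lemma of_pairwise {T V : Set K} (hV : V.Finite) (hV₀ : 0 ∉ V) (hT₀ : 0 ∉ T)
    (h : ∀ a ∈ T, ∀ b ∈ T, ∃ v ∈ V, IsSquare (v * a * b)) : FiniteSquareClasses T := by
  rcases T.eq_empty_or_nonempty with rfl | ⟨a, ha⟩
  · exact ⟨∅, Set.finite_empty, Set.notMem_empty _, by simp⟩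
  · refine ⟨(· * a) '' V, hV.image _, ?_, fun b hb ↦ ?_⟩
    · rintro ⟨v, hv, hva⟩
      rcases mul_eq_zero.1 hva with rfl | rfl
      exacts [hV₀ hv, hT₀ ha]
    · obtain ⟨v, hv, hsq⟩ := h a ha b hb
      exact ⟨v * a, ⟨v, hv, rfl⟩, hsq⟩

lemma iUnion {ι : Type*} [Finite ι] {T : ι → Set K} (h : ∀ i, FiniteSquareClasses (T i)) :
    FiniteSquareClasses (⋃ i, T i) := by
  choose S hS hS₀ hsq using h
  refine ⟨⋃ i, S i, Set.finite_iUnion hS, by simpa using hS₀, fun t ht ↦ ?_⟩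
  obtain ⟨i, hi⟩ := Set.mem_iUnion.1 ht
  obtain ⟨s, hs, hst⟩ := hsq i t hi
  exact ⟨s, Set.mem_iUnion.2 ⟨i, hs⟩, hst⟩

lemma of_mul_sq_mem {T T' : Set K} (hT' : FiniteSquareClasses T')
    (h : ∀ t ∈ T, ∃ d ≠ 0, t * d ^ 2 ∈ T') : FiniteSquareClasses T := by
  obtain ⟨S, hS, hS₀, hsq⟩ := hT'
  refine ⟨S, hS, hS₀, fun t ht ↦ ?_⟩
  obtain ⟨d, hd, htd⟩ := h t ht
  obtain ⟨s, hs, r, hr⟩ := hsq _ htd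
  refine ⟨s, hs, r / d, ?_⟩
  field_simp
  linear_combination hr

lemma exists_map_eq_imp_isSquare {T : Set K} (hT : FiniteSquareClasses T) :
    ∃ (F : Type u) (_ : Finite F) (φ : K → F),
      ∀ a ∈ T, ∀ b ∈ T, φ a = φ b → IsSquare (a * b) := by
  obtain ⟨S, hS, hS₀, hsq⟩ := hT
  choose! s hs hst using hsq
  classical
  have := hS.to_subtype
  refine ⟨Option S, inferInstance, fun a ↦ if ha : a ∈ T then some ⟨s a, hs a ha⟩ else none,
    fun a ha b hb hab ↦ ?_⟩
  simp only [dif_pos ha, dif_pos hb, Option.some.injEq, Subtype.mk.injEq] at hab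
  have hs₀ : s a ≠ 0 := fun h ↦ hS₀ (h ▸ hs a ha)
  obtain ⟨r, hr⟩ := hst a ha
  obtain ⟨r', hr'⟩ := hst b hb
  refine ⟨r * r' / s a, ?_⟩
  rw [← hab] at hr'
  field_simp
  linear_combination s a * b * hr + r * r * hr'

end FiniteSquareClasses

end SquareClasses

section SquareIdeals

open NumberField nonZeroDivisors

lemma exists_span_eq_sup_mul_sq {O : Type*} [CommRing O] [IsDedekindDomain O] {α α' w : O}
    (hw : w ≠ 0) (h : α * α' = w ^ 2) :
    ∃ b : Ideal O, b ≠ 0 ∧ Ideal.span {α} = (Ideal.span {α} ⊔ Ideal.span {α'}) * b ^ 2 := by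
  have hspan : Ideal.span {α} * Ideal.span {α'} = Ideal.span {w} ^ 2 := by
    rw [Ideal.span_singleton_mul_span_singleton, h, Ideal.span_singleton_pow]
  have hα : Ideal.span {α} ≠ 0 := by
    rw [Ne, Ideal.zero_eq_bot, Ideal.span_singleton_eq_bot]
    rintro rfl
    exact pow_ne_zero 2 hw (by rw [← h, zero_mul])
  rw [← Ideal.gcd_eq_sup]
  obtain ⟨B, B', hB, hB', hcop⟩ := extract_gcd (Ideal.span {α}) (Ideal.span {α'})
  generalize gcd (Ideal.span {α}) (Ideal.span {α'}) = J at *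
  have hJ : J ≠ 0 := by
    rintro rfl
    exact hα (by rw [hB, zero_mul])
  obtain ⟨V, hV⟩ : J ∣ Ideal.span {w} := by
    rw [← UniqueFactorizationMonoid.pow_dvd_pow_iff_dvd two_ne_zero, ← hspan, hB, hB']
    exact ⟨B * B', by ring⟩
  have hBB' : B * B' = V ^ 2 := by
    apply mul_left_cancel₀ (pow_ne_zero 2 hJ)
    rw [← mul_pow, ← hV, ← hspan, hB, hB']
    ring
  obtain ⟨b, rfl⟩ := exists_eq_pow_of_mul_eq_pow hcop hBB'
  refine ⟨b, ?_, hB⟩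
  rintro rfl
  exact hα (by rw [hB, zero_pow two_ne_zero, mul_zero])

lemma exists_mul_sq_eq_of_classGroup_eq {O : Type*} [CommRing O] [IsDedekindDomain O] {α β : O}
    {J : Ideal O} {b c : (Ideal O)⁰} (hα : Ideal.span {α} = J * (b : Ideal O) ^ 2)
    (hβ : Ideal.span {β} = J * (c : Ideal O) ^ 2) (hbc : ClassGroup.mk0 b = ClassGroup.mk0 c) :
    ∃ x y : O, x ≠ 0 ∧ ∃ u : Oˣ, α * x ^ 2 * u = β * y ^ 2 := by
  obtain ⟨x, y, hx, -, hxy⟩ := ClassGroup.mk0_eq_mk0_iff.1 hbc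
  have hspan : Ideal.span {α * x ^ 2} = Ideal.span {β * y ^ 2} := by
    simp only [← Ideal.span_singleton_mul_span_singleton, ← Ideal.span_singleton_pow, hα, hβ]
    calc J * (b : Ideal O) ^ 2 * Ideal.span {x} ^ 2 = J * (Ideal.span {x} * b) ^ 2 := by ring
      _ = J * (Ideal.span {y} * c) ^ 2 := by rw [hxy]
      _ = J * (c : Ideal O) ^ 2 * Ideal.span {y} ^ 2 := by ring
  obtain ⟨u, hu⟩ := Ideal.span_singleton_eq_span_singleton.1 hspan
  exact ⟨x, y, hx, u, hu⟩

variable {K : Type*} [Field K] [NumberField K]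

lemma exists_finite_units_mul_sq :
    ∃ U : Set (𝓞 K)ˣ, U.Finite ∧ ∀ u : (𝓞 K)ˣ, ∃ v ∈ U, ∃ w : (𝓞 K)ˣ, u = v * w ^ 2 := by
  have : Group.FG (𝓞 K)ˣ := Group.fg_iff_monoid_fg.2 inferInstance
  have : (powMonoidHom (α := (𝓞 K)ˣ) 2).range.FiniteIndex :=
    Subgroup.finiteIndex_range_powMonoidHom_of_fg _ two_ne_zero
  refine ⟨Set.range fun q : (𝓞 K)ˣ ⧸ (powMonoidHom (α := (𝓞 K)ˣ) 2).range ↦ q.out,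
    Set.finite_range _, fun u ↦ ⟨_, ⟨u, rfl⟩, ?_⟩⟩
  obtain ⟨w, hw⟩ := QuotientGroup.eq.1 (QuotientGroup.out_eq'
    (u : (𝓞 K)ˣ ⧸ (powMonoidHom (α := (𝓞 K)ˣ) 2).range))
  exact ⟨w, eq_mul_of_inv_mul_eq hw.symm⟩

lemma finiteSquareClasses_of_classGroup (J : Ideal (𝓞 K)) (c : ClassGroup (𝓞 K)) :
    FiniteSquareClasses {z : K | ∃ α : 𝓞 K, α ≠ 0 ∧ algebraMap (𝓞 K) K α = z ∧
      ∃ b : (Ideal (𝓞 K))⁰, Ideal.span {α} = J * (b : Ideal (𝓞 K)) ^ 2 ∧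
        ClassGroup.mk0 b = c} := by
  obtain ⟨U, hU, hrep⟩ := exists_finite_units_mul_sq (K := K)
  refine .of_pairwise (V := (fun u : (𝓞 K)ˣ ↦ algebraMap (𝓞 K) K u) '' U) (hU.image _) ?_ ?_ ?_
  · simp
  · rintro ⟨α, hα, hα₀, -⟩
    exact hα (by simpa using hα₀)
  rintro _ ⟨α, -, rfl, b, hb, hbc⟩ _ ⟨β, -, rfl, b', hb', hb'c⟩
  obtain ⟨x, y, hx, u, hu⟩ := exists_mul_sq_eq_of_classGroup_eq hb hb' (hbc.trans hb'c.symm)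
  obtain ⟨v, hv, w, rfl⟩ := hrep u
  refine ⟨_, ⟨v, hv, rfl⟩, algebraMap (𝓞 K) K β * algebraMap (𝓞 K) K y /
    (algebraMap (𝓞 K) K x * algebraMap (𝓞 K) K w), ?_⟩
  have hx' : algebraMap (𝓞 K) K x ≠ 0 := by simpa using hx
  have hw' : algebraMap (𝓞 K) K w ≠ 0 := by simp
  have huK := congrArg (algebraMap (𝓞 K) K) hu
  simp only [Units.val_mul, Units.val_pow_eq_pow_val, map_mul, map_pow] at huK
  field_simp
  linear_combination algebraMap (𝓞 K) K β * huK

lemma finiteSquareClasses_of_mem_ideal {D : 𝓞 K} (hD : D ≠ 0) :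
    FiniteSquareClasses {z : K | ∃ α : 𝓞 K, α ≠ 0 ∧ algebraMap (𝓞 K) K α = z ∧
      ∃ J b : Ideal (𝓞 K), D ∈ J ∧ b ≠ 0 ∧ Ideal.span {α} = J * b ^ 2} := by
  have : Finite {J : Ideal (𝓞 K) // D ∈ J} := Ring.HasFiniteQuotients.finite_setOfPred_mem D hD
  refine (FiniteSquareClasses.iUnion fun i : {J : Ideal (𝓞 K) // D ∈ J} × ClassGroup (𝓞 K) ↦
    finiteSquareClasses_of_classGroup i.1.1 i.2).of_mul_sq_mem ?_
  rintro _ ⟨α, hα, rfl, J, b, hDJ, hb, hαJ⟩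
  refine ⟨1, one_ne_zero, ?_⟩
  rw [one_pow, mul_one]
  let b' : (Ideal (𝓞 K))⁰ := ⟨b, mem_nonZeroDivisors_of_ne_zero hb⟩
  exact Set.mem_iUnion.2 ⟨(⟨J, hDJ⟩, ClassGroup.mk0 b'), α, hα, rfl, b', hαJ, rfl⟩

end SquareIdeals

section Descent

open NumberField

lemma exists_isCoprime_of_sq_eq_cube_add {n : ℤ} {x y : ℚ} (hxy : y ^ 2 = x ^ 3 + n) :
    ∃ p d w : ℤ, d ≠ 0 ∧ IsCoprime p d ∧ x = p / d ^ 2 ∧ y = w / d ^ 3 := by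
  obtain ⟨p, q, hq, hcop, rfl⟩ : ∃ p q : ℤ, 0 < q ∧ IsCoprime p q ∧ x = p / q :=
    ⟨x.num, x.den, by exact_mod_cast x.den_pos, Int.isCoprime_iff_gcd_eq_one.2 x.reduced,
      (Rat.num_div_den x).symm⟩
  have hq₀ : (q : ℚ) ≠ 0 := by exact_mod_cast hq.ne'
  obtain ⟨z, hz⟩ := exists_eq_pow_of_cast_eq_pow (r := q ^ 2 * y) two_pos
    (z := q * (p ^ 3 + n * q ^ 3)) (by
      rw [mul_pow, hxy]
      push_cast
      field_simp)
  have hcop' : IsCoprime q (p ^ 3 + n * q ^ 3) := by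
    have hadd := (hcop.pow_left (m := 3)).symm.add_mul_left_right (n * q ^ 2)
    rwa [show q * (n * q ^ 2) = n * q ^ 3 by ring] at hadd
  obtain ⟨d, rfl⟩ : ∃ d : ℤ, q = d ^ 2 := by
    obtain ⟨d, hd | hd⟩ := Int.sq_of_isCoprime hcop' hz
    · exact ⟨d, hd⟩
    · nlinarith [sq_nonneg d]
  have hd : (d : ℚ) ≠ 0 := by
    rintro hd
    exact hq₀ (by rw [Int.cast_pow, hd, zero_pow two_ne_zero])
  have hsq : ((p ^ 3 + n * d ^ 6 : ℤ) : ℚ) = (y * d ^ 3) ^ 2 := by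
    rw [mul_pow, hxy]
    push_cast
    field_simp
  obtain ⟨w, hw⟩ := IsIntegrallyClosed.exists_algebraMap_eq_of_isIntegral_pow two_pos
    (hsq ▸ isIntegral_algebraMap : IsIntegral ℤ ((y * d ^ 3) ^ 2))
  refine ⟨p, d, w, by exact_mod_cast hd, (IsCoprime.pow_right_iff two_pos).1 hcop, by simp, ?_⟩
  rw [eq_div_iff (pow_ne_zero 3 hd)]
  simpa using hw.symm

lemma three_mul_sq_mem_span_sup_span {O : Type*} [CommRing O] {p δ : O} (h : IsCoprime p δ)
    (ε : O) : 3 * ε ^ 2 ∈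
      Ideal.span {p - δ * ε} ⊔ Ideal.span {p ^ 2 + p * δ * ε + δ ^ 2 * ε ^ 2} := by
  obtain ⟨s, t, hst⟩ : IsCoprime (p ^ 2) (δ ^ 2) := h.pow
  rw [← Ideal.span_insert, Ideal.mem_span_pair]
  refine ⟨s * (3 * ε ^ 2 * (p + δ * ε)) - (t + s * ε ^ 2) * (p + 2 * δ * ε), t + s * ε ^ 2, ?_⟩
  linear_combination (3 * ε ^ 2) * hst

lemma exists_ringOfIntegers_of_pow_eq_intCast {K : Type*} [Field K] {e : K} {k : ℕ} (hk : 0 < k)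
    {m : ℤ} (he : e ^ k = m) : ∃ ε : 𝓞 K, algebraMap (𝓞 K) K ε = e ∧ ε ^ k = m := by
  have hint : IsIntegral ℤ e := .of_pow hk (he ▸ isIntegral_algebraMap)
  obtain ⟨ε, hε⟩ : ∃ ε : 𝓞 K, algebraMap (𝓞 K) K ε = e := ⟨⟨e, hint⟩, rfl⟩
  refine ⟨ε, hε, FaithfulSMul.algebraMap_injective (𝓞 K) K ?_⟩
  rw [map_pow, map_intCast, hε, he]

lemma finiteSquareClasses_X_sub_root {K : Type*} [Field K] [NumberField K] {n : ℤ} (hn : n ≠ 0)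
    {e : K} (he : e ^ 3 = -(n : K)) :
    FiniteSquareClasses {z : K | ∃ x y : ℚ, y ≠ 0 ∧ y ^ 2 = x ^ 3 + n ∧ z = x - e} := by
  obtain ⟨ε, hε, hε₃⟩ := exists_ringOfIntegers_of_pow_eq_intCast three_pos (m := -n)
    (he.trans (by push_cast; rfl))
  have hε₀ : ε ≠ 0 := by
    rintro rfl
    exact hn (by simpa using hε₃.symm)
  refine (finiteSquareClasses_of_mem_ideal (K := K) (D := 3 * ε ^ 2)
    (mul_ne_zero (by simp) (pow_ne_zero 2 hε₀))).of_mul_sq_mem ?_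
  rintro _ ⟨x, y, hy, hxy, rfl⟩
  obtain ⟨p, d, w, hd, hcop, rfl, rfl⟩ := exists_isCoprime_of_sq_eq_cube_add hxy
  have hw : (w : 𝓞 K) ≠ 0 := by
    rintro hw
    exact hy (by simp [Int.cast_eq_zero.1 hw])
  have hpw : (p : 𝓞 K) ^ 3 + n * d ^ 6 = w ^ 2 := by
    have : (d : ℚ) ≠ 0 := Int.cast_ne_zero.2 hd
    field_simp at hxy
    rw [mul_comm (n : 𝓞 K)]
    exact_mod_cast hxy.symm
  have hfactor : ((p : 𝓞 K) - d ^ 2 * ε) * (p ^ 2 + p * d ^ 2 * ε + (d ^ 2) ^ 2 * ε ^ 2) =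
      w ^ 2 := by
    push_cast at hε₃
    linear_combination hpw - (d : 𝓞 K) ^ 6 * hε₃
  obtain ⟨b, hb, hspan⟩ := exists_span_eq_sup_mul_sq hw hfactor
  have hcop' : IsCoprime (p : 𝓞 K) ((d : 𝓞 K) ^ 2) :=
    (hcop.map (Int.castRingHom (𝓞 K))).pow_right
  have hdK : (d : K) ≠ 0 := Int.cast_ne_zero.2 hd
  refine ⟨d, hdK, p - d ^ 2 * ε, ?_, ?_, _, b, three_mul_sq_mem_span_sup_span hcop' ε, hb, hspan⟩
  · exact left_ne_zero_of_mul (hfactor ▸ pow_ne_zero 2 hw)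
  · simp only [map_sub, map_mul, map_pow, map_intCast, hε]
    push_cast
    field_simp

lemma chordX_sub_mul_sub_mul_sub {K : Type*} [Field K] {x y x' y' e m : K} (he : e ^ 3 = -m)
    (h : y ^ 2 = x ^ 3 + m) (h' : y' ^ 2 = x' ^ 3 + m) (hx : x ≠ x') :
    (((y - y') / (x - x')) ^ 2 - x - x' - e) * ((x - e) * (x' - e)) =
      ((y - y') / (x - x') * (e - x) + y) ^ 2 := by
  have hsub : x - x' ≠ 0 := sub_ne_zero.2 hx
  set l := (y - y') / (x - x') with hl
  have hy' : y' = y - l * (x - x') := by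
    rw [hl, div_mul_cancel₀ _ hsub, sub_sub_cancel]
  have hslope : 2 * l * y - l ^ 2 * (x - x') = x ^ 2 + x * x' + x' ^ 2 := by
    apply mul_left_cancel₀ hsub
    rw [hy'] at h'
    linear_combination h - h'
  linear_combination (-(e - x)) * hslope - h - he

end Descent

section SquareRoots

/-- In terms of `θ` with `θ³ = -n`: the element `x - θ` is the square of some `a + bθ + cθ²`. -/
def HasSqrtSubTheta (n x : ℚ) : Prop :=
  ∃ a b c : ℚ, b ^ 2 + 2 * a * c = 0 ∧ 2 * a * b - c ^ 2 * n = -1 ∧ a ^ 2 - 2 * b * c * n = x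

lemma exists_dvd_sq_sub_of_isSquare_mk {R : Type*} [CommRing R] {M q : R[X]} (hM : M.Monic)
    (hM₁ : M ≠ 1) (hq : IsSquare (AdjoinRoot.mk M q)) :
    ∃ p : R[X], M ∣ (∑ i ∈ Finset.range M.natDegree, C (p.coeff i) * X ^ i) ^ 2 - q := by
  obtain ⟨r, hr⟩ := hq
  obtain ⟨p, rfl⟩ := AdjoinRoot.mk_surjective r
  refine ⟨p %ₘ M, ?_⟩
  have hmod : AdjoinRoot.mk M (p %ₘ M) = AdjoinRoot.mk M p :=
    AdjoinRoot.mk_leftInverse hM (AdjoinRoot.mk M p)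
  rw [← as_sum_range_C_mul_X_pow' _ (natDegree_modByMonic_lt p hM hM₁), ← AdjoinRoot.mk_eq_mk,
    map_pow, hmod, sq, hr]

lemma coeff_eq_zero_of_quadratic_eq_zero {R : Type*} [Semiring R] {p q r : R}
    (h : C p + C q * X + C r * X ^ 2 = 0) : p = 0 ∧ q = 0 ∧ r = 0 := by
  refine ⟨?_, ?_, ?_⟩
  · simpa [coeff_X, coeff_C, coeff_X_pow] using congrArg (coeff · 0) h
  · simpa [coeff_X, coeff_C, coeff_X_pow] using congrArg (coeff · 1) h
  · simpa [coeff_X, coeff_C, coeff_X_pow] using congrArg (coeff · 2) h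

lemma hasSqrtSubTheta_of_isSquare {n x : ℚ}
    (h : IsSquare (AdjoinRoot.mk (X ^ 3 + C n) (C x - X))) : HasSqrtSubTheta n x := by
  have hdeg : (X ^ 3 + C n).natDegree = 3 := by compute_degree!
  obtain ⟨p, hp⟩ :=
    exists_dvd_sq_sub_of_isSquare_mk (by monicity!) (fun h ↦ by simp [h] at hdeg) h
  simp only [hdeg, Finset.sum_range_succ, Finset.sum_range_zero, zero_add, pow_zero, mul_one,
    pow_one] at hp
  set a := p.coeff 0
  set b := p.coeff 1
  set c := p.coeff 2
  have hdvd : X ^ 3 + C n ∣ C (a ^ 2 - 2 * b * c * n - x) + C (2 * a * b - c ^ 2 * n + 1) * X +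
      C (b ^ 2 + 2 * a * c) * X ^ 2 := by
    convert dvd_sub hp (dvd_mul_right (X ^ 3 + C n) (C (2 * b * c) + C (c ^ 2) * X)) using 1
    simp only [C_add, C_sub, C_mul, C_pow, C_ofNat, C_1]
    ring
  have hzero := eq_zero_of_dvd_of_natDegree_lt hdvd (by
    rw [hdeg]
    exact Nat.lt_succ_of_le (by compute_degree))
  obtain ⟨h₀, h₁, h₂⟩ := coeff_eq_zero_of_quadratic_eq_zero hzero
  exact ⟨a, b, c, h₂, eq_neg_of_add_eq_zero_left h₁, sub_eq_zero.1 h₀⟩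

lemma exists_of_isSquare_mk_cyclotomic_three {x m : ℚ}
    (h : IsSquare (AdjoinRoot.mk (X ^ 2 + X + 1) (C x + C m * X))) :
    ∃ s t : ℚ, x = s ^ 2 - t ^ 2 ∧ m = 2 * s * t - t ^ 2 := by
  have hdeg : (X ^ 2 + X + 1 : ℚ[X]).natDegree = 2 := by compute_degree!
  obtain ⟨p, hp⟩ :=
    exists_dvd_sq_sub_of_isSquare_mk (by monicity!) (fun h ↦ by simp [h] at hdeg) h
  simp only [hdeg, Finset.sum_range_succ, Finset.sum_range_zero, zero_add, pow_zero, mul_one,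
    pow_one] at hp
  set s := p.coeff 0
  set t := p.coeff 1
  have hdvd : X ^ 2 + X + 1 ∣ C (s ^ 2 - t ^ 2 - x) + C (2 * s * t - t ^ 2 - m) * X := by
    convert dvd_sub hp (dvd_mul_right (X ^ 2 + X + 1) (C (t ^ 2))) using 1
    simp only [C_sub, C_mul, C_pow, C_ofNat]
    ring
  have hzero := eq_zero_of_dvd_of_natDegree_lt hdvd (by
    rw [hdeg]
    exact Nat.lt_succ_of_le (by compute_degree))
  obtain ⟨h₀, h₁, -⟩ := coeff_eq_zero_of_quadratic_eq_zero (p := s ^ 2 - t ^ 2 - x)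
    (q := 2 * s * t - t ^ 2 - m) (r := 0) (by rw [C_0, zero_mul, add_zero, hzero])
  exact ⟨s, t, (sub_eq_zero.1 h₀).symm, (sub_eq_zero.1 h₁).symm⟩

/-- The square roots at the places `θ = -m` and `θ = -mω` of `ℚ[θ]/(θ³ + m³)` are glued by solving
`r = a - bm + cm²`, `s + tω = a - bmω + cm²ω²` for `a`, `b`, `c`. -/
lemma hasSqrtSubTheta_cube {m x r s t : ℚ} (hm : m ≠ 0) (h₁ : x + m = r ^ 2)
    (h₂ : x = s ^ 2 - t ^ 2) (h₃ : m = 2 * s * t - t ^ 2) : HasSqrtSubTheta (m ^ 3) x := by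
  obtain ⟨c, hc⟩ : ∃ c, r - s - t = c * (3 * m ^ 2) := ⟨(r - s - t) / (3 * m ^ 2), by field_simp⟩
  obtain ⟨a, ha⟩ : ∃ a, s = a - c * m ^ 2 := ⟨s + c * m ^ 2, by ring⟩
  obtain ⟨b, hb⟩ : ∃ b, t = -(b * m) - c * m ^ 2 := ⟨-(t + c * m ^ 2) / m, by field_simp; ring⟩
  obtain rfl : r = a - b * m + c * m ^ 2 := by linear_combination hc + ha + hb
  subst ha hb
  have hquad : b ^ 2 + 2 * a * c = 0 := by
    apply mul_left_cancel₀ (by positivity : 3 * m ^ 2 ≠ 0)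
    linear_combination -h₁ + h₂ + h₃
  have hlin : 2 * a * b - c ^ 2 * m ^ 3 = -1 := by
    apply mul_left_cancel₀ hm
    linear_combination h₃ - m ^ 2 * hquad
  exact ⟨a, b, c, hquad, hlin, by linear_combination -h₂ + m ^ 2 * hquad⟩

end SquareRoots

namespace MordellCurve

open WeierstrassCurve.Affine (Point)

variable {n : ℤ}

lemma add_self_mem_range_two_nsmul {G : Type*} [AddCommGroup G] (g : G) :
    g + g ∈ (nsmulAddMonoidHom (α := G) 2).range :=
  ⟨g, two_nsmul g⟩

/-- Half of a point with `x - θ = (a + bθ + cθ²)²` is `± (b / c, 1 / c)`. -/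
lemma some_mem_range_two_nsmul (hn : n ≠ 0) {x y : ℚ}
    (h : (MordellCurve n).toAffine.Nonsingular x y) (hx : HasSqrtSubTheta n x) :
    Point.some x y h ∈ (nsmulAddMonoidHom (α := (MordellCurve n).toAffine.Point) 2).range := by
  obtain ⟨a, b, c, hquad, hlin, hconst⟩ := hx
  have hc : c ≠ 0 := by
    rintro rfl
    obtain rfl : b = 0 := by simpa using hquad
    norm_num at hlin
  have ha : a = -b ^ 2 / (2 * c) := by
    field_simp
    linear_combination hquad
  have hn' : (n : ℚ) = (1 + 2 * a * b) / c ^ 2 := by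
    field_simp
    linear_combination -hlin
  have hhalf : (MordellCurve n).toAffine.Nonsingular (b / c) (1 / c) := by
    rw [nonsingular_iff hn, hn', ha]
    field_simp
    ring
  obtain ⟨y', h', hdouble⟩ := add_self_some hhalf (one_div_ne_zero hc)
  have hX : (3 * (b / c) ^ 2 / (2 * (1 / c))) ^ 2 - b / c - b / c = x := by
    rw [← hconst, hn', ha]
    field_simp
    ring
  simp only [hX] at hdouble
  rcases eq_or_eq_neg_of_X_eq h (hX ▸ h') with heq | heq
  · rw [heq, ← hdouble]
    exact add_self_mem_range_two_nsmul _
  · rw [heq, ← hdouble]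
    exact neg_mem (add_self_mem_range_two_nsmul _)

end MordellCurve

/-- Whenever `φ` agrees at the first coordinates `x ≠ x'` of two points not of order two, the third
point on the chord through them has a first coordinate satisfying `p`. In a `2`-descent, `φ` is the
class of `x - θ` modulo squares, and `p` says that `x - θ` is a square. -/
def DetectsOnChords {F : Type*} (n : ℤ) (φ : ℚ → F) (p : ℚ → Prop) : Prop :=
  ∀ x y x' y' : ℚ, y ≠ 0 → y' ≠ 0 → y ^ 2 = x ^ 3 + n → y' ^ 2 = x' ^ 3 + n → x ≠ x' →
    φ x = φ x' → p (((y - y') / (x - x')) ^ 2 - x - x')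

lemma finiteIndex_of_map_eq_imp_sub_mem {G F : Type*} [AddCommGroup G] [Finite F]
    (H : AddSubgroup G) (φ : G → F) (hφ : ∀ g g', φ g = φ g' → g - g' ∈ H) : H.FiniteIndex := by
  rw [AddSubgroup.finiteIndex_iff_finite_quotient]
  refine Finite.of_injective (fun q : G ⧸ H ↦ φ q.out) fun q q' hqq' ↦ ?_
  rw [← QuotientAddGroup.out_eq' q, ← QuotientAddGroup.out_eq' q', QuotientAddGroup.eq,
    neg_add_eq_sub]
  exact hφ _ _ hqq'.symm

namespace MordellCurve

open WeierstrassCurve.Affine (Point)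

variable {n : ℤ}

/-- Extends a function of the first coordinate to all points, sending infinity and the points of
order two to two values of their own. -/
noncomputable def extendToPoint {F : Type*} (φ : ℚ → F) :
    (MordellCurve n).toAffine.Point → Option (Option F)
  | .zero => none
  | .some x y _ => open Classical in if y = 0 then some none else some (some (φ x))

lemma sub_mem_range_two_nsmul_of_extendToPoint_eq (hn : n ≠ 0) {F : Type*} {φ : ℚ → F}
    (hφ : DetectsOnChords n φ (HasSqrtSubTheta n)) {P Q : (MordellCurve n).toAffine.Point}
    (hPQ : extendToPoint φ P = extendToPoint φ Q) :
    P - Q ∈ (nsmulAddMonoidHom (α := (MordellCurve n).toAffine.Point) 2).range := by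
  rcases P with _ | ⟨x, y, h⟩ <;> rcases Q with _ | ⟨x', y', h'⟩ <;>
    simp only [extendToPoint] at hPQ
  · rw [sub_self]
    exact zero_mem _
  · split_ifs at hPQ
  · split_ifs at hPQ
  by_cases hx : x = x'
  · subst hx
    rcases eq_or_eq_neg_of_X_eq h h' with heq | heq
    · rw [heq, sub_self]
      exact zero_mem _
    · rw [heq, sub_eq_add_neg]
      exact add_self_mem_range_two_nsmul _
  have heq := equation_of_nonsingular h
  have heq' := equation_of_nonsingular h'
  split_ifs at hPQ with hy hy' hy'
  · refine absurd ((Odd.strictMono_pow (by decide : Odd 3)).injective ?_) hx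
    rw [hy] at heq
    rw [hy'] at heq'
    linarith
  · simp at hPQ
  · simp at hPQ
  · obtain ⟨h'', hneg⟩ := neg_some h'
    obtain ⟨y₃, h₃, hadd⟩ := add_some_of_X_ne h h'' hx
    rw [sub_eq_add_neg, hneg, hadd]
    exact some_mem_range_two_nsmul hn h₃ (hφ x y x' (-y') hy (neg_ne_zero.2 hy') heq
      (by rw [neg_sq, heq']) hx (by simpa using hPQ))

lemma finiteIndex_range_two_nsmul_of_detectsOnChords (hn : n ≠ 0) {F : Type*} [Finite F]
    {φ : ℚ → F} (hφ : DetectsOnChords n φ (HasSqrtSubTheta n)) :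
    (nsmulAddMonoidHom (α := (MordellCurve n).toAffine.Point) 2).range.FiniteIndex :=
  finiteIndex_of_map_eq_imp_sub_mem _ (extendToPoint φ) fun _ _ ↦
    sub_mem_range_two_nsmul_of_extendToPoint_eq hn hφ

universe u

lemma exists_detectsOnChords_isSquare {K : Type u} [Field K] [NumberField K] (hn : n ≠ 0) {e : K}
    (he : e ^ 3 = -(n : K)) :
    ∃ (F : Type u) (_ : Finite F) (φ : ℚ → F),
      DetectsOnChords n φ fun x ↦ IsSquare ((x : K) - e) := by
  obtain ⟨F, hF, φ, hφ⟩ := (finiteSquareClasses_X_sub_root hn he).exists_map_eq_imp_isSquare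
  refine ⟨F, hF, fun x ↦ φ (x - e), fun x y x' y' hy hy' h h' hx hxx' ↦ ?_⟩
  obtain ⟨r, hr⟩ := hφ _ ⟨x, y, hy, h, rfl⟩ _ ⟨x', y', hy', h', rfl⟩ hxx'
  have hsub (x y : ℚ) (hy : y ≠ 0) (h : y ^ 2 = x ^ 3 + n) : (x : K) - e ≠ 0 := by
    intro hxe
    rw [← sub_eq_zero.1 hxe] at he
    have hx : x ^ 3 = -(n : ℚ) := by exact_mod_cast he
    exact hy (by simpa [hx] using h)
  have hr₀ : r ≠ 0 := by
    rintro rfl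
    exact mul_ne_zero (hsub x y hy h) (hsub x' y' hy' h') (by simpa using hr)
  have hchord := chordX_sub_mul_sub_mul_sub (x := (x : K)) (y := y) (x' := x') (y' := y') he
    (by exact_mod_cast h) (by exact_mod_cast h') (by exact_mod_cast hx)
  rw [hr] at hchord
  refine ⟨((y - y') / (x - x') * (e - x) + y) / r, ?_⟩
  rw [← mul_div_mul_comm, eq_div_iff (mul_ne_zero hr₀ hr₀)]
  push_cast
  linear_combination hchord

lemma mk_C_eq_ratCast {M : ℚ[X]} [Fact (Irreducible M)] (q : ℚ) : AdjoinRoot.mk M (C q) = q :=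
  eq_ratCast (AdjoinRoot.of M) q

lemma finiteIndex_range_two_nsmul_of_irreducible (hn : n ≠ 0)
    (hirr : Irreducible (X ^ 3 + C (n : ℚ))) :
    (nsmulAddMonoidHom (α := (MordellCurve n).toAffine.Point) 2).range.FiniteIndex := by
  have : Fact (Irreducible (X ^ 3 + C (n : ℚ))) := ⟨hirr⟩
  have he : AdjoinRoot.root (X ^ 3 + C (n : ℚ)) ^ 3 = -(n : AdjoinRoot (X ^ 3 + C (n : ℚ))) := by
    have hroot := AdjoinRoot.mk_self (f := X ^ 3 + C (n : ℚ))
    rw [map_add, map_pow, AdjoinRoot.mk_X, mk_C_eq_ratCast, Rat.cast_intCast] at hroot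
    exact eq_neg_of_add_eq_zero_left hroot
  obtain ⟨F, _, φ, hφ⟩ := exists_detectsOnChords_isSquare hn he
  refine finiteIndex_range_two_nsmul_of_detectsOnChords hn (φ := φ)
    fun x y x' y' hy hy' h h' hx hxx' ↦ hasSqrtSubTheta_of_isSquare ?_
  rw [map_sub, mk_C_eq_ratCast, AdjoinRoot.mk_X]
  exact hφ x y x' y' hy hy' h h' hx hxx'

/-- Here `ℚ[θ]/(θ³ + m³)` is the product of `ℚ` and `ℚ(ω)`, with `θ = -m` and `θ = -mω`. -/
lemma finiteIndex_range_two_nsmul_of_eq_cube (hn : n ≠ 0) {m : ℚ} (hm : m ^ 3 = n) :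
    (nsmulAddMonoidHom (α := (MordellCurve n).toAffine.Point) 2).range.FiniteIndex := by
  have hm₀ : m ≠ 0 := by
    rintro rfl
    exact hn (by simpa using hm.symm)
  have : Fact (Irreducible (X ^ 2 + X + 1 : ℚ[X])) :=
    ⟨cyclotomic_three ℚ ▸ cyclotomic.irreducible_rat three_pos⟩
  set ω := AdjoinRoot.root (X ^ 2 + X + 1 : ℚ[X]) with hω_def
  have hω : ω ^ 2 + ω + 1 = 0 := by
    have hroot := AdjoinRoot.mk_self (f := (X ^ 2 + X + 1 : ℚ[X]))
    rwa [map_add, map_add, map_pow, map_one, AdjoinRoot.mk_X] at hroot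
  have he : (-(m : AdjoinRoot (X ^ 2 + X + 1 : ℚ[X])) * ω) ^ 3 = -(n : AdjoinRoot _) := by
    have hmK : (m : AdjoinRoot (X ^ 2 + X + 1 : ℚ[X])) ^ 3 = n := by exact_mod_cast hm
    linear_combination -(m : AdjoinRoot _) ^ 3 * (ω - 1) * hω - hmK
  obtain ⟨F, _, φ, hφ⟩ := exists_detectsOnChords_isSquare hn he
  obtain ⟨F', _, φ', hφ'⟩ := exists_detectsOnChords_isSquare (K := ℚ) hn (e := -m)
    (by rw [Odd.neg_pow (by decide), hm])
  refine finiteIndex_range_two_nsmul_of_detectsOnChords hn (φ := fun x ↦ (φ x, φ' x))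
    fun x y x' y' hy hy' h h' hx hxx' ↦ ?_
  rw [Prod.mk.injEq] at hxx'
  have hsq := hφ x y x' y' hy hy' h h' hx hxx'.1
  obtain ⟨r, hr⟩ := hφ' x y x' y' hy hy' h h' hx hxx'.2
  rw [neg_mul, sub_neg_eq_add, ← mk_C_eq_ratCast, ← mk_C_eq_ratCast, hω_def, ← AdjoinRoot.mk_X,
    ← map_mul, ← map_add] at hsq
  obtain ⟨s, t, hs, ht⟩ := exists_of_isSquare_mk_cyclotomic_three hsq
  rw [← hm]
  exact hasSqrtSubTheta_cube hm₀ (r := r) (by simpa [sq] using hr) hs ht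

theorem finiteIndex_range_two_nsmul (hn : n ≠ 0) :
    (nsmulAddMonoidHom (α := (MordellCurve n).toAffine.Point) 2).range.FiniteIndex := by
  by_cases hcube : ∃ m : ℚ, m ^ 3 = n
  · obtain ⟨m, hm⟩ := hcube
    exact finiteIndex_range_two_nsmul_of_eq_cube hn hm
  · push Not at hcube
    have hirr := X_pow_sub_C_irreducible_of_prime Nat.prime_three (a := -(n : ℚ)) fun b hb ↦
      hcube (-b) (by rw [Odd.neg_pow (by decide), hb, neg_neg])
    rw [C_neg, sub_neg_eq_add] at hirr
    exact finiteIndex_range_two_nsmul_of_irreducible hn hirr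

theorem fg_point (hn : n ≠ 0) : AddGroup.FG (MordellCurve n).toAffine.Point := by
  have := northcott_height hn
  exact AddCommGroup.fg_of_descent' (h := height) (finiteIndex_range_two_nsmul hn) height_nonneg
    (abs_height_parallelogram_le hn)

end MordellCurve

/-! ### Arithmetic progressions on Mordell curves -/

namespace IsNontrivAP

lemma comp_castLE {F : Type*} [Field F] {N M : ℕ} {u : Fin N → F} (hu : IsNontrivAP u)
    (h : M ≤ N) : IsNontrivAP (u ∘ Fin.castLE h) := by
  obtain ⟨a, b, hb, hu⟩ := hu
  exact ⟨a, b, hb, fun i ↦ hu (Fin.castLE h i)⟩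

variable {F : Type*} [Field F] [CharZero F] {N : ℕ} {u : Fin N → F}

lemma injective (hu : IsNontrivAP u) : Function.Injective u := by
  obtain ⟨a, b, hb, hu⟩ := hu
  intro i j hij
  rw [hu, hu, add_right_inj, mul_left_inj' hb, Nat.cast_inj] at hij
  exact Fin.ext (Nat.succ_injective hij)

lemma hasSmallRelation (hu : IsNontrivAP u) (i : Fin N) {j k : Fin N} (hjk : j ≠ k) :
    HasSmallRelation N (u i) (u j) (u k) := by
  obtain ⟨a, b, -, hu⟩ := hu
  refine ⟨(j : ℤ) - k, (i : ℤ) - k, (j : ℤ) - i, ?_, by omega, by omega, by omega, ?_⟩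
  · rw [Int.cast_ne_zero]
    omega
  · rw [hu, hu, hu]
    push_cast
    ring

theorem exists_length_le {d m : ℕ} (hd : d ≠ 0) (hm : 2 ≤ m) {T : Set ℚ} (hT : T.Finite) :
    ∃ L : ℕ, ∀ c : ℚ, c ≠ 0 → ∀ (N : ℕ) (u : Fin N → ℚ), IsNontrivAP u → d + 1 ≤ N →
      (∀ i : Fin N, (i : ℕ) ≤ d → u i ^ d / c ∈ T) →
      (∀ i, ∃ r, u i ^ d - c = r ^ m) → N ≤ L := by
  obtain ⟨L, hL⟩ := exists_length_le_of_div_mem_finite hd hm hT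
  refine ⟨L, fun c hc N u ⟨a, b, hb, hu⟩ hdN hmem hpow ↦ ?_⟩
  have term {k : ℕ} (hk : k ∈ Finset.Icc 1 N) :
      ∃ i : Fin N, (i : ℕ) + 1 = k ∧ u i = a + k * b := by
    rw [Finset.mem_Icc] at hk
    refine ⟨⟨k - 1, by omega⟩, Nat.sub_add_cancel hk.1, ?_⟩
    rw [hu, Nat.sub_add_cancel hk.1]
  refine hL c a b hc hb (fun k hk ↦ ?_) N fun k hk ↦ ?_
  · obtain ⟨i, hi, hui⟩ := term (Finset.Icc_subset_Icc_right hdN hk)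
    rw [← hui]
    exact hmem i (by have := (Finset.mem_Icc.1 hk).2; omega)
  · obtain ⟨i, -, hui⟩ := term hk
    rw [← hui]
    exact hpow i

end IsNontrivAP

namespace MordellCurve

open WeierstrassCurve.Affine (Point)

lemma exists_length_le_of_isNontrivAP_X (B : ℝ) :
    ∃ L : ℕ, ∀ n : ℤ, n ≠ 0 → ∀ (N : ℕ) (x y : Fin N → ℚ),
      (∀ i, y i ^ 2 = x i ^ 3 + n) → IsNontrivAP x → 4 ≤ N →
      (∀ i : Fin N, (i : ℕ) ≤ 3 → mordellHeight (n : ℚ) (x i) ≤ B) → N ≤ L := by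
  obtain ⟨L, hL⟩ := IsNontrivAP.exists_length_le (d := 3) three_ne_zero le_rfl
    ((Northcott.finite_le (h := logHeight₁ (K := ℚ)) B).image Neg.neg)
  refine ⟨L, fun n hn N x y heq hx hN hB ↦ ?_⟩
  refine hL (-n) (neg_ne_zero.2 (Int.cast_ne_zero.2 hn)) N x hx hN
    (fun i hi ↦ ⟨_, hB i hi, by rw [div_neg]⟩) fun i ↦ ⟨y i, ?_⟩
  rw [heq, sub_neg_eq_add]

lemma exists_length_le_of_isNontrivAP_Y (B : ℝ) :
    ∃ L : ℕ, ∀ n : ℤ, n ≠ 0 → ∀ (N : ℕ) (x y : Fin N → ℚ),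
      (∀ i, y i ^ 2 = x i ^ 3 + n) → IsNontrivAP y → 3 ≤ N →
      (∀ i : Fin N, (i : ℕ) ≤ 2 → mordellHeight (n : ℚ) (x i) ≤ B) → N ≤ L := by
  obtain ⟨L, hL⟩ := IsNontrivAP.exists_length_le (d := 2) (m := 3) two_ne_zero (by norm_num)
    ((Northcott.finite_le (h := logHeight₁ (K := ℚ)) B).image (· + 1))
  refine ⟨L, fun n hn N x y heq hy hN hB ↦ ?_⟩
  have hn' : (n : ℚ) ≠ 0 := Int.cast_ne_zero.2 hn
  refine hL n hn' N y hy hN (fun i hi ↦ ⟨_, hB i hi, ?_⟩) fun i ↦ ⟨x i, ?_⟩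
  · rw [heq, add_div, div_self hn']
  · rw [heq, add_sub_cancel_right]

lemma pointRelation_of_isNontrivAP {n : ℤ} {N : ℕ} {x y : Fin N → ℚ}
    (hns : ∀ i, (MordellCurve n).toAffine.Nonsingular (x i) (y i))
    (hAP : IsNontrivAP x ∨ IsNontrivAP y) (i : Fin N) {j k : Fin N} (hjk : j ≠ k) :
    PointRelation N (Point.some _ _ (hns i)) (Point.some _ _ (hns j)) (Point.some _ _ (hns k)) :=
  ⟨_, _, _, _, _, _, _, _, _, rfl, rfl, rfl,
    hAP.imp (fun h ↦ h.hasSmallRelation i hjk) (fun h ↦ h.hasSmallRelation i hjk)⟩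

lemma injective_some_of_isNontrivAP {n : ℤ} {N : ℕ} {x y : Fin N → ℚ}
    (hns : ∀ i, (MordellCurve n).toAffine.Nonsingular (x i) (y i))
    (hAP : IsNontrivAP x ∨ IsNontrivAP y) :
    Function.Injective fun i ↦ Point.some _ _ (hns i) := by
  intro i j hij
  obtain ⟨hx, hy⟩ := Point.some.inj hij
  exact hAP.elim (fun h ↦ h.injective hx) (fun h ↦ h.injective hy)

theorem exists_mordellHeight_le (r : ℕ) :
    ∃ M : ℕ, 4 ≤ M ∧ ∀ n : ℤ, n ≠ 0 → grpRank (MordellCurve n).toAffine.Point = r →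
      ∀ x y : Fin M → ℚ, (∀ i, (MordellCurve n).toAffine.Nonsingular (x i) (y i)) →
        (IsNontrivAP x ∨ IsNontrivAP y) →
        ∀ i, mordellHeight (n : ℚ) (x i) ≤ configurationBound M := by
  obtain ⟨N, hN⟩ := exists_height_le_configurationBound r
  refine ⟨N + 4, Nat.le_add_left _ _, fun n hn hr x y hns hAP i ↦ ?_⟩
  have : Module.Finite ℤ (MordellCurve n).toAffine.Point :=
    Module.Finite.iff_addGroup_fg.2 (fg_point hn)
  rw [← height_some (hns i)]
  exact hN (N + 4) (Nat.le_add_right _ _) n hn inferInstance hr _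
    (injective_some_of_isNontrivAP hns hAP)
    (fun i _ _ _ _ hjk ↦ pointRelation_of_isNontrivAP hns hAP i hjk) i

theorem exists_length_le_of_grpRank_eq (r : ℕ) :
    ∃ L : ℕ, ∀ n : ℤ, n ≠ 0 → grpRank (MordellCurve n).toAffine.Point = r →
      ∀ (N : ℕ) (x y : Fin N → ℚ), (∀ i, (MordellCurve n).toAffine.Nonsingular (x i) (y i)) →
        (IsNontrivAP x ∨ IsNontrivAP y) → N ≤ L := by
  obtain ⟨M, hM, hheight⟩ := exists_mordellHeight_le r
  obtain ⟨Lx, hLx⟩ := exists_length_le_of_isNontrivAP_X (configurationBound M)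
  obtain ⟨Ly, hLy⟩ := exists_length_le_of_isNontrivAP_Y (configurationBound M)
  refine ⟨M + Lx + Ly, fun n hn hr N x y hns hAP ↦ ?_⟩
  rcases le_total N M with hNM | hMN
  · omega
  have heq (i) : y i ^ 2 = x i ^ 3 + n := equation_of_nonsingular (hns i)
  have hsmall (i : Fin N) (hi : (i : ℕ) < M) : mordellHeight (n : ℚ) (x i) ≤ configurationBound M :=
    hheight n hn hr (x ∘ Fin.castLE hMN) (y ∘ Fin.castLE hMN) (fun i ↦ hns (Fin.castLE hMN i))
      (hAP.imp (·.comp_castLE hMN) (·.comp_castLE hMN)) ⟨i, hi⟩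
  rcases hAP with hx | hy
  · have := hLx n hn N x y heq hx (hM.trans hMN) fun i hi ↦ hsmall i (by omega)
    omega
  · have := hLy n hn N x y heq hy (by omega) fun i hi ↦ hsmall i (by omega)
    omega

lemma isElliptic {n : ℤ} (hn : n ≠ 0) : (MordellCurve n).IsElliptic := by
  refine ⟨isUnit_iff_ne_zero.2 ?_⟩
  simp [MordellCurve, WeierstrassCurve.Δ, WeierstrassCurve.b₂, WeierstrassCurve.b₄,
    WeierstrassCurve.b₆, WeierstrassCurve.b₈, hn]

lemma j_eq_zero (n : ℤ) [(MordellCurve n).IsElliptic] : (MordellCurve n).j = 0 := by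
  rw [WeierstrassCurve.j_eq_zero_iff]
  simp [MordellCurve, WeierstrassCurve.c₄, WeierstrassCurve.b₂, WeierstrassCurve.b₄]

end MordellCurve

theorem mohanty_of_rank_bounded_general :
    ∃ N₀ : ℕ → ℕ, ∀ n : ℤ, n ≠ 0 → ∀ (N : ℕ) (x y : Fin N → ℚ),
      (∀ i, (MordellCurve n).toAffine.Nonsingular (x i) (y i)) →
      (IsNontrivAP x ∨ IsNontrivAP y) → N ≤ N₀ (grpRank (MordellCurve n).toAffine.Point) := by
  choose N₀ hN₀ using MordellCurve.exists_length_le_of_grpRank_eq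
  exact ⟨N₀, fun n hn ↦ hN₀ _ n hn rfl⟩

/-- Uniform boundedness of ranks of elliptic curves over `ℚ` with `j`-invariant `0` implies
Mohanty's conjecture: a uniform bound on the length of non-trivial arithmetic progressions in
the `x`- or `y`-coordinates of rational points of Mordell curves `Aₙ : y² = x³ + n`,
`n` sixth-power free. -/
theorem mohanty_of_rank_bounded
    (R : ℕ)
    (hR : ∀ (W : WeierstrassCurve ℚ) [W.IsElliptic], W.j = 0 →
      grpRank W.toAffine.Point ≤ R) :
    ∃ N₀ : ℕ, ∀ n : ℤ, SixthPowerFree n →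
      ∀ (N : ℕ) (x y : Fin N → ℚ),
        (∀ i, (MordellCurve n).toAffine.Nonsingular (x i) (y i)) →
        (IsNontrivAP x ∨ IsNontrivAP y) →
        N ≤ N₀ := by
  obtain ⟨N₀, hN₀⟩ := mohanty_of_rank_bounded_general
  refine ⟨(Finset.range (R + 1)).sup N₀, fun n hn N x y hns hAP ↦ ?_⟩
  have := MordellCurve.isElliptic hn.1
  have hrank : grpRank (MordellCurve n).toAffine.Point ≤ R := hR _ (MordellCurve.j_eq_zero n)
  exact (hN₀ n hn.1 N x y hns hAP).trans
    (Finset.le_sup (f := N₀) (Finset.mem_range_succ_iff.2 hrank))
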